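/- Suppose in addition that B is the convex hull of a finite set of points of ℤ² (the board polygon has integral vertices). Then for each positive integer q there exist a positive integer p and polynomials f_0, …, f_{p−1} with rational coefficients of degree 2q such that u_P(q;n) = f_{n mod p}(n) for all integers n ≥ 0, and the coefficient of n^{2q} and the coefficient of n^{2q−1} are each the same in every constituent f_k; in particular the coefficient of n^{2q} in every constituent equals (vol B)^q / q!, where vol B is the Lebesgue area of B. -/

import Mathlib

open MeasureTheory Pointwise

/-!
Being a nonattacking configuration of ordered points in the dilate `t B°`, `t = n + 1`, is a
condition on the signs of finitely many integral linear forms in the coordinates and `t`. Summing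
out one coordinate at a time keeps the count a quasi-polynomial on each of finitely many cones of
parameters, so the count is a quasi-polynomial in `t`. All but `O(t ^ (d q - 1))` of the `q`-tuples
of lattice points of `t B°` are nonattacking, so `u n / n ^ (d q)` tends to `(vol B) ^ q / q!`,
which is therefore the leading coefficient of every constituent.

The next coefficient is controlled by the convexity `2 u (n + 1) ≤ u n + u (n + 2)`. Fix a vertex
`v` of `B`, so that `t B° + v ⊆ (t + 1) B°`. Given a configuration inside `(t + 1) B°` but not
inside `t B° + v`, let `e` be the first facet inequality of `t B° + v` that one of its points
violates, and translate the configuration by a vertex of `B` on the facet `e`. The result lies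
inside `(t + 2) B°`, and `e` is the first facet inequality of `(t + 1) B° + v` that it violates, so
the translation vector can be recovered and the map is injective. Convexity forces the second
coefficient of the `n`-th constituent to be antitone in `n`; being periodic, it is constant.
-/

namespace NonattackingRiders

open Polynomial

section QuasiPolynomial

/-- A function on `ℤ` with some positive period. -/
def IsPeriodic {α : Type*} (ψ : ℤ → α) : Prop := ∃ N : ℕ, 0 < N ∧ Function.Periodic ψ N

lemma IsPeriodic.map₂ {α β γ : Type*} {φ : ℤ → α} {ψ : ℤ → β} (hφ : IsPeriodic φ)
    (hψ : IsPeriodic ψ) (op : α → β → γ) : IsPeriodic fun x => op (φ x) (ψ x) := by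
  obtain ⟨N, hN, hφ⟩ := hφ
  obtain ⟨N', hN', hψ⟩ := hψ
  refine ⟨N * N', Nat.mul_pos hN hN', fun x => ?_⟩
  have hφ' : φ (x + (N * N' : ℕ)) = φ x := by
    simpa [mul_comm] using hφ.int_mul N' x
  have hψ' : ψ (x + (N * N' : ℕ)) = ψ x := by
    simpa using hψ.int_mul N x
  simp only [hφ', hψ']

lemma isPeriodic_const {α : Type*} (c : α) : IsPeriodic fun _ => c := ⟨1, one_pos, fun _ => rfl⟩

lemma IsPeriodic.map {α β : Type*} {ψ : ℤ → α} (h : IsPeriodic ψ) (f : α → β) :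
    IsPeriodic fun x => f (ψ x) :=
  h.map₂ (isPeriodic_const ()) fun a _ => f a

lemma isPeriodic_emod {N : ℕ} (hN : 0 < N) : IsPeriodic fun x : ℤ => x % N :=
  ⟨N, hN, fun x => by simp⟩

lemma IsPeriodic.comp_mul_add {α : Type*} {ψ : ℤ → α} (h : IsPeriodic ψ) (a b : ℤ) :
    IsPeriodic fun x => ψ (a * x + b) := by
  obtain ⟨N, hN, h⟩ := h
  refine ⟨N, hN, fun x => ?_⟩
  have shift : a * (x + N) + b = a * x + b + a * N := by ring
  exact (congrArg ψ shift).trans (h.int_mul a _)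

lemma IsPeriodic.comp_sub_ediv {α : Type*} {ψ : ℤ → α} (h : IsPeriodic ψ) {a : ℕ} (ha : 0 < a)
    (ε : ℤ) : IsPeriodic fun x => ψ ((x - ε) / a) := by
  obtain ⟨N, hN, h⟩ := h
  refine ⟨a * N, Nat.mul_pos ha hN, fun x => ?_⟩
  have shift : x + ((a * N : ℕ) : ℤ) - ε = (x - ε) + a * N := by push_cast; ring
  simp only [shift, Int.add_mul_ediv_left _ _ (Int.natCast_pos.mpr ha).ne', h _]

lemma periodic_map_emod {α : Type*} {ψ : ℤ → α} {N : ℤ} (h : Function.Periodic ψ N) (x : ℤ) :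
    ψ (x % N) = ψ x := by
  simpa only [Int.emod_def, mul_comm, Int.cast_id] using h.sub_int_mul_eq (x := x) (x / N)

lemma sum_ite_emod_eq {α : Type*} [AddCommMonoid α] {N : ℕ} (hN : 0 < N) (g : ℤ → α) (x : ℤ) :
    ∑ r ∈ Finset.range N, (if x % N = r then g r else 0) = g (x % N) := by
  have hlt : x % N < N := Int.emod_lt_of_pos _ (by positivity)
  obtain ⟨r, hr⟩ := Int.eq_ofNat_of_zero_le (Int.emod_nonneg x (by positivity : (N : ℤ) ≠ 0))
  rw [hr, Finset.sum_eq_single r]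
  · simp
  · intro s _ hs
    rw [if_neg (by exact_mod_cast hs.symm)]
  · intro hr'
    simp only [Finset.mem_range] at hr'
    omega

/-- Quasi-polynomials on `ℤ`, encoded as the values at `x` of a polynomial depending periodically
on `x`. -/
def IsQuasiPoly (f : ℤ → ℚ) : Prop :=
  ∃ P : ℤ → ℚ[X], IsPeriodic P ∧ ∀ x : ℤ, f x = (P x).eval (x : ℚ)

lemma IsPeriodic.isQuasiPoly {ψ : ℤ → ℚ} (h : IsPeriodic ψ) : IsQuasiPoly ψ :=
  ⟨fun x => C (ψ x), h.map C, fun _ => eval_C.symm⟩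

lemma isQuasiPoly_intCast : IsQuasiPoly fun x => (x : ℚ) :=
  ⟨fun _ => X, isPeriodic_const X, fun _ => eval_X.symm⟩

lemma IsQuasiPoly.add {f g : ℤ → ℚ} (hf : IsQuasiPoly f) (hg : IsQuasiPoly g) :
    IsQuasiPoly (f + g) := by
  obtain ⟨P, hP, hf⟩ := hf
  obtain ⟨Q, hQ, hg⟩ := hg
  exact ⟨fun x => P x + Q x, hP.map₂ hQ (· + ·), fun x => by simp [hf, hg]⟩

lemma IsQuasiPoly.mul {f g : ℤ → ℚ} (hf : IsQuasiPoly f) (hg : IsQuasiPoly g) :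
    IsQuasiPoly (f * g) := by
  obtain ⟨P, hP, hf⟩ := hf
  obtain ⟨Q, hQ, hg⟩ := hg
  exact ⟨fun x => P x * Q x, hP.map₂ hQ (· * ·), fun x => by simp [hf, hg]⟩

lemma IsQuasiPoly.sum {ι : Type*} (s : Finset ι) {f : ι → ℤ → ℚ}
    (hf : ∀ i ∈ s, IsQuasiPoly (f i)) : IsQuasiPoly (∑ i ∈ s, f i) :=
  Finset.sum_induction _ _ (fun _ _ => IsQuasiPoly.add) (isPeriodic_const 0).isQuasiPoly hf

lemma IsQuasiPoly.eval {f : ℤ → ℚ} (hf : IsQuasiPoly f) {Q : ℤ → ℚ[X]} (hQ : IsPeriodic Q) :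
    IsQuasiPoly fun x => (Q x).eval (f x) := by
  obtain ⟨P, hP, hf⟩ := hf
  exact ⟨fun x => (Q x).comp (P x), hQ.map₂ hP Polynomial.comp, fun x => by simp [hf]⟩

lemma isQuasiPoly_sub_ediv {a : ℕ} (ha : 0 < a) (ε : ℤ) :
    IsQuasiPoly fun x => (((x - ε) / a : ℤ) : ℚ) := by
  have hrem : IsPeriodic fun x : ℤ => ((1 * x + -ε) % a) := (isPeriodic_emod ha).comp_mul_add 1 (-ε)
  refine ⟨_, hrem.map fun r : ℤ => (X - C (ε : ℚ) - C (r : ℚ)) * C (1 / (a : ℚ)), fun x => ?_⟩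
  have hdiv : (((x - ε) % a : ℤ) : ℚ) + a * (((x - ε) / a : ℤ) : ℚ) = x - ε := by
    exact_mod_cast Int.emod_add_mul_ediv (x - ε) a
  have ha' : (a : ℚ) ≠ 0 := by positivity
  simp only [eval_mul, eval_sub, eval_X, eval_C, one_mul, ← sub_eq_add_neg]
  field_simp
  linarith

lemma IsQuasiPoly.comp_sub_ediv {g : ℤ → ℚ} (hg : IsQuasiPoly g) {a : ℕ} (ha : 0 < a) (ε : ℤ) :
    IsQuasiPoly fun x => g ((x - ε) / a) := by
  obtain ⟨P, hP, hg⟩ := hg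
  simpa only [hg] using (isQuasiPoly_sub_ediv ha ε).eval (hP.comp_sub_ediv ha ε)

lemma exists_polynomial_antidifference (p : ℚ[X]) :
    ∃ P : ℚ[X], ∀ x : ℚ, P.eval x - P.eval (x - 1) = p.eval x := by
  induction p using Polynomial.induction_on' with
  | add p q hp hq =>
    obtain ⟨P, hP⟩ := hp
    obtain ⟨Q, hQ⟩ := hq
    refine ⟨P + Q, fun x => ?_⟩
    simp only [eval_add]
    linarith [hP x, hQ x]
  | monomial n c =>
    refine ⟨C (c / (n + 1)) * (Polynomial.bernoulli (n + 1)).comp (X + 1), fun x => ?_⟩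
    have hbernoulli := bernoulli_eval_one_add (n + 1) x
    have hn : ((n : ℚ) + 1) ≠ 0 := by positivity
    simp only [eval_mul, eval_C, eval_comp, eval_add, eval_X, eval_one, eval_monomial,
      sub_add_cancel]
    rw [add_comm x 1, hbernoulli]
    push_cast
    field_simp
    ring

lemma sub_ediv_sub_one {N r : ℕ} (hr : r < N) (x : ℤ) :
    (x - 1 - r) / N = (x - r) / N - if x % N = r then 1 else 0 := by
  have hN : (0 : ℤ) < N := by omega
  have hx := Int.emod_add_mul_ediv (x - r) N
  have hrem : (x - r) % N = 0 ↔ x % N = r := by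
    rw [← Int.emod_eq_emod_iff_emod_sub_eq_zero, Int.emod_eq_of_lt (a := r) (by positivity)
      (by exact_mod_cast hr)]
  have hnonneg := Int.emod_nonneg (x - r) hN.ne'
  have hlt := Int.emod_lt_of_pos (x - r) hN
  split_ifs with h
  · rw [hrem.mpr h] at hx
    have : x - 1 - r = (N - 1) + N * ((x - r) / N - 1) := by linarith
    rw [this, Int.add_mul_ediv_left _ _ hN.ne', Int.ediv_eq_zero_of_lt] <;> omega
  · have hne : (x - r) % N ≠ 0 := fun h0 => h (hrem.mp h0)
    have : x - 1 - r = ((x - r) % N - 1) + N * ((x - r) / N) := by linarith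
    rw [this, Int.add_mul_ediv_left _ _ hN.ne', Int.ediv_eq_zero_of_lt] <;> omega

lemma exists_antidifference_residue {N r : ℕ} (hr : r < N) (p : ℚ[X]) :
    ∃ g, IsQuasiPoly g ∧
      ∀ x : ℤ, g x - g (x - 1) = if x % N = r then p.eval (x : ℚ) else 0 := by
  obtain ⟨Q, hQ⟩ := exists_polynomial_antidifference (p.comp (C (r : ℚ) + C (N : ℚ) * X))
  refine ⟨_, (isQuasiPoly_sub_ediv (by omega : 0 < N) r).eval (isPeriodic_const Q), fun x => ?_⟩
  simp only [sub_ediv_sub_one hr x]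
  split_ifs with h
  · have hx : (x : ℚ) = r + N * (((x - r) / N : ℤ) : ℚ) := by
      have hdvd : (N : ℤ) ∣ x - r := h ▸ Int.dvd_self_sub_emod
      have hx : x = r + N * ((x - r) / N) := by rw [Int.mul_ediv_cancel' hdvd]; ring
      exact_mod_cast hx
    rw [Int.cast_sub, Int.cast_one, hQ]
    simp [← hx]
  · simp

lemma IsQuasiPoly.exists_antidifference {f : ℤ → ℚ} (hf : IsQuasiPoly f) :
    ∃ g, IsQuasiPoly g ∧ ∀ x, g x - g (x - 1) = f x := by
  obtain ⟨P, ⟨N, hN, hP⟩, hf⟩ := hf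
  have hres : ∀ r : Fin N, ∃ g, IsQuasiPoly g ∧
      ∀ x : ℤ, g x - g (x - 1) = if x % N = (r : ℕ) then (P (r : ℕ)).eval (x : ℚ) else 0 :=
    fun r => exists_antidifference_residue r.2 _
  choose g hg hdiff using hres
  refine ⟨∑ r, g r, IsQuasiPoly.sum _ fun r _ => hg r, fun x => ?_⟩
  simp only [Finset.sum_apply, ← Finset.sum_sub_distrib, hdiff]
  rw [Fin.sum_univ_eq_sum_range (fun r : ℕ => if x % N = r then (P r).eval (x : ℚ) else 0),
    sum_ite_emod_eq hN (fun r => (P r).eval (x : ℚ)), hf, periodic_map_emod hP]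

lemma sum_Ioc_zero_of_antidifference {f g : ℤ → ℚ} (h : ∀ x, g x - g (x - 1) = f x) {X : ℤ}
    (hX : 0 ≤ X) : ∑ x ∈ Finset.Ioc 0 X, f x = g X - g 0 := by
  induction X, hX using Int.leInduction with
  | base => simp
  | succ n hn ih =>
    rw [← Finset.insert_Ioc_right_eq_Ioc_add_one hn, Finset.sum_insert (by simp), ih, ← h]
    simp

end QuasiPolynomial

section PiecewiseQuasiPolynomial

/-- Generators of the algebra of piecewise quasi-polynomial functions: linear forms, indicators of
open half-spaces, and periodic functions of linear forms. -/
inductive IsGenerator {Λ : Type*} [AddCommGroup Λ] : (Λ → ℚ) → Prop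
  | linear (l : Λ →+ ℤ) : IsGenerator fun y => (l y : ℚ)
  | pos (l : Λ →+ ℤ) : IsGenerator fun y => if 0 < l y then 1 else 0
  | periodic (l : Λ →+ ℤ) {ψ : ℤ → ℚ} (hψ : IsPeriodic ψ) : IsGenerator fun y => ψ (l y)

/-- Piecewise quasi-polynomial functions on an abelian group, the pieces being rational polyhedral
cones. No constants are allowed inside the indicators, so that on `ℤ` such a function is a single
quasi-polynomial throughout the positive integers and not merely from some point on. -/
def piecewiseQuasiPoly (Λ : Type*) [AddCommGroup Λ] : Subalgebra ℚ (Λ → ℚ) :=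
  Algebra.adjoin ℚ {F | IsGenerator F}

namespace piecewiseQuasiPoly

variable {Λ Λ' : Type*} [AddCommGroup Λ] [AddCommGroup Λ']

lemma linear_mem (l : Λ →+ ℤ) : (fun y => (l y : ℚ)) ∈ piecewiseQuasiPoly Λ :=
  Algebra.subset_adjoin (IsGenerator.linear l)

lemma pos_mem (l : Λ →+ ℤ) : (fun y => if 0 < l y then (1 : ℚ) else 0) ∈ piecewiseQuasiPoly Λ :=
  Algebra.subset_adjoin (IsGenerator.pos l)

lemma periodic_mem (l : Λ →+ ℤ) {ψ : ℤ → ℚ} (hψ : IsPeriodic ψ) :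
    (fun y => ψ (l y)) ∈ piecewiseQuasiPoly Λ :=
  Algebra.subset_adjoin (IsGenerator.periodic l hψ)

lemma const_mem (c : ℚ) : (fun _ => c) ∈ piecewiseQuasiPoly Λ :=
  (piecewiseQuasiPoly Λ).algebraMap_mem c

lemma nonpos_mem (l : Λ →+ ℤ) :
    (fun y => if l y ≤ 0 then (1 : ℚ) else 0) ∈ piecewiseQuasiPoly Λ := by
  convert sub_mem (const_mem 1) (pos_mem l) using 1
  ext y
  by_cases h : 0 < l y
  · simp [h, not_le.mpr h]
  · simp [h, not_lt.mp h]

lemma ne_zero_mem (l : Λ →+ ℤ) :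
    (fun y => if l y ≠ 0 then (1 : ℚ) else 0) ∈ piecewiseQuasiPoly Λ := by
  convert add_mem (pos_mem l) (pos_mem (-l)) using 1
  ext y
  rcases lt_trichotomy (l y) 0 with h | h | h
  · simp [h, h.ne, not_lt.mpr h.le]
  · simp [h]
  · simp [h, h.ne', not_lt.mpr h.le]

lemma comp_mem (φ : Λ →+ Λ') {F : Λ' → ℚ} (hF : F ∈ piecewiseQuasiPoly Λ') :
    (fun y => F (φ y)) ∈ piecewiseQuasiPoly Λ := by
  induction hF using Algebra.adjoin_induction with
  | mem F hF =>
    cases hF with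
    | linear l => exact linear_mem (l.comp φ)
    | pos l => exact pos_mem (l.comp φ)
    | periodic l hψ => exact periodic_mem (l.comp φ) hψ
  | algebraMap r => exact const_mem r
  | add F G _ _ hF hG => exact add_mem hF hG
  | mul F G _ _ hF hG => exact mul_mem hF hG

lemma eval_mem {F : Λ → ℚ} (hF : F ∈ piecewiseQuasiPoly Λ) (P : ℚ[X]) :
    (fun y => P.eval (F y)) ∈ piecewiseQuasiPoly Λ := by
  convert (aeval (⟨F, hF⟩ : piecewiseQuasiPoly Λ) P).2 using 1
  ext y
  rw [← Subalgebra.coe_val, ← aeval_algHom_apply]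
  exact (aeval_algHom_apply (Pi.evalAlgHom ℚ (fun _ : Λ => ℚ) y) F P)

end piecewiseQuasiPoly

open piecewiseQuasiPoly

variable {Λ : Type*} [AddCommGroup Λ]

lemma IsQuasiPoly.comp_mem {f : ℤ → ℚ} (hf : IsQuasiPoly f) (l : Λ →+ ℤ) :
    (fun y => f (l y)) ∈ piecewiseQuasiPoly Λ := by
  obtain ⟨P, ⟨N, hN, hP⟩, hf⟩ := hf
  have hterm : ∀ r ∈ Finset.range N,
      (fun y => (if l y % N = r then 1 else 0) * (P r).eval (l y : ℚ)) ∈ piecewiseQuasiPoly Λ :=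
    fun r _ => mul_mem
      (periodic_mem l ((isPeriodic_emod hN).map fun s => if s = (r : ℤ) then (1 : ℚ) else 0))
      (eval_mem (linear_mem l) (P r))
  convert sum_mem hterm using 1
  ext y
  simp only [Finset.sum_apply, ite_mul, one_mul, zero_mul]
  rw [sum_ite_emod_eq hN (fun r => (P r).eval (l y : ℚ)), periodic_map_emod hP, hf]

lemma linearForm_prod_int_apply (L : Λ × ℤ →+ ℤ) (p : Λ × ℤ) :
    L p = L.comp (AddMonoidHom.inl Λ ℤ) p.1 + L (0, 1) * p.2 := by
  have hp : p = (p.1, 0) + p.2 • ((0, 1) : Λ × ℤ) := by ext <;> simp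
  conv_lhs => rw [hp, map_add, map_zsmul]
  simp [mul_comm]

end PiecewiseQuasiPolynomial

section Summation

open piecewiseQuasiPoly Filter

variable {Λ : Type*} [AddCommGroup Λ]

/-- The summands handled by the summation theorem: a function of the parameter times a
quasi-polynomial in the summation variable `x`, cut off at `a * x ≤ l y` or at `a * x < l y`
according to `ε`. -/
inductive IsCutTerm : (Λ × ℤ → ℚ) → Prop
  | mk {h : Λ → ℚ} (hh : h ∈ piecewiseQuasiPoly Λ) {f : ℤ → ℚ} (hf : IsQuasiPoly f) {a : ℕ}
    (ha : 0 < a) (l : Λ →+ ℤ) {ε : ℤ} (hε : ε = 0 ∨ ε = 1) :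
    IsCutTerm fun p => h p.1 * f p.2 * if a * p.2 + ε ≤ l p.1 then 1 else 0

/-- The span of the cut terms, which turns out to be stable under multiplication by piecewise
quasi-polynomial functions of both variables. -/
def cutSpan (Λ : Type*) [AddCommGroup Λ] : Submodule ℚ (Λ × ℤ → ℚ) :=
  Submodule.span ℚ {w | IsCutTerm w}

lemma IsCutTerm.mem_cutSpan {w : Λ × ℤ → ℚ} (hw : IsCutTerm w) : w ∈ cutSpan Λ :=
  Submodule.subset_span hw

lemma ite_mul_ite_of_imp {P Q G : Prop} [Decidable P] [Decidable Q] [Decidable G]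
    (hPQ : G → P → Q) (hQP : ¬ G → Q → P) :
    (if P then (1 : ℚ) else 0) * (if Q then (1 : ℚ) else 0) =
      (if G then (1 : ℚ) else 0) * (if P then (1 : ℚ) else 0) +
        (1 - (if G then (1 : ℚ) else 0)) * (if Q then (1 : ℚ) else 0) := by
  by_cases hG : G <;> by_cases hP : P <;> by_cases hQ : Q <;> simp_all

-- Of two cuts of the same variable one implies the other, and a linear condition on the parameter
-- decides which one.
lemma exists_cut_mul_cut {a b : ℕ} (ha : 0 < a) (hb : 0 < b) (l m : Λ →+ ℤ) {ε δ : ℤ}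
    (hε : ε = 0 ∨ ε = 1) (hδ : δ = 0 ∨ δ = 1) :
    ∃ g ∈ piecewiseQuasiPoly Λ, ∀ (y : Λ) (x : ℤ),
      (if a * x + ε ≤ l y then (1 : ℚ) else 0) * (if b * x + δ ≤ m y then (1 : ℚ) else 0) =
        g y * (if a * x + ε ≤ l y then (1 : ℚ) else 0) +
          (1 - g y) * (if b * x + δ ≤ m y then (1 : ℚ) else 0) := by
  have : (0 : ℤ) < a := by exact_mod_cast ha
  have : (0 : ℤ) < b := by exact_mod_cast hb
  by_cases hc : ε = 0 ∧ δ = 1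
  · obtain ⟨rfl, rfl⟩ := hc
    refine ⟨_, pos_mem ((a : ℤ) • m - (b : ℤ) • l), fun y x => ?_⟩
    simp only [AddMonoidHom.sub_apply, AddMonoidHom.smul_apply, smul_eq_mul]
    refine ite_mul_ite_of_imp (fun h h1 => ?_) (fun h h1 => ?_) <;> by_contra h2 <;> nlinarith
  · refine ⟨_, nonpos_mem ((b : ℤ) • l - (a : ℤ) • m), fun y x => ?_⟩
    simp only [AddMonoidHom.sub_apply, AddMonoidHom.smul_apply, smul_eq_mul]
    refine ite_mul_ite_of_imp (fun h h1 => ?_) (fun h h1 => ?_) <;> by_contra h2 <;>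
      rcases hε with rfl | rfl <;> rcases hδ with rfl | rfl <;> first | omega | nlinarith

lemma IsCutTerm.mul_cut_mem_cutSpan {w : Λ × ℤ → ℚ} (hw : IsCutTerm w) {b : ℕ} (hb : 0 < b)
    (m : Λ →+ ℤ) {δ : ℤ} (hδ : δ = 0 ∨ δ = 1) :
    (fun p : Λ × ℤ => (if b * p.2 + δ ≤ m p.1 then (1 : ℚ) else 0) * w p) ∈
      cutSpan Λ := by
  obtain ⟨hh, hf, ha, l, hε⟩ := hw
  obtain ⟨g, hg, hcut⟩ := exists_cut_mul_cut ha hb l m hε hδ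
  convert add_mem (IsCutTerm.mk (mul_mem hh hg) hf ha l hε).mem_cutSpan
    (IsCutTerm.mk (mul_mem hh (sub_mem (const_mem 1) hg)) hf hb m hδ).mem_cutSpan using 1
  ext p
  simp only [Pi.add_apply, Pi.mul_apply, Pi.sub_apply]
  rw [mul_comm, mul_assoc, hcut]
  ring

lemma IsCutTerm.linear_mul_mem_cutSpan {w : Λ × ℤ → ℚ} (hw : IsCutTerm w) (L : Λ × ℤ →+ ℤ) :
    (fun p => (L p : ℚ)) * w ∈ cutSpan Λ := by
  obtain ⟨hh, hf, ha, l, hε⟩ := hw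
  convert add_mem
    (IsCutTerm.mk (mul_mem hh (linear_mem (L.comp (AddMonoidHom.inl Λ ℤ)))) hf ha l hε).mem_cutSpan
    (IsCutTerm.mk (mul_mem hh (const_mem (L (0, 1) : ℚ))) (isQuasiPoly_intCast.mul hf) ha l
      hε).mem_cutSpan using 1
  ext p
  simp only [Pi.add_apply, Pi.mul_apply, linearForm_prod_int_apply L p]
  push_cast
  ring

lemma IsCutTerm.pos_mul_mem_cutSpan {w : Λ × ℤ → ℚ} (hw : IsCutTerm w) (L : Λ × ℤ →+ ℤ) :
    (fun p => if 0 < L p then (1 : ℚ) else 0) * w ∈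
      cutSpan Λ := by
  set m := L.comp (AddMonoidHom.inl Λ ℤ)
  have hL : ∀ p, L p = m p.1 + L (0, 1) * p.2 := linearForm_prod_int_apply L
  rcases lt_trichotomy (L (0, 1)) 0 with hneg | hzero | hpos
  · obtain ⟨b, hb⟩ := Int.eq_ofNat_of_zero_le (neg_nonneg.mpr hneg.le)
    convert hw.mul_cut_mem_cutSpan (b := b) (by omega) m (Or.inr rfl) using 1
    ext p
    have hiff : 0 < L p ↔ b * p.2 + 1 ≤ m p.1 := by
      rw [hL, ← hb]
      constructor <;> intro h <;> linarith
    simp only [Pi.mul_apply, hiff]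
  · obtain ⟨hh, hf, ha, l, hε⟩ := hw
    convert (IsCutTerm.mk (mul_mem (pos_mem m) hh) hf ha l hε).mem_cutSpan using 1
    ext p
    simp only [Pi.mul_apply, hL p, hzero, zero_mul, add_zero]
    ring
  · obtain ⟨b, hb⟩ := Int.eq_ofNat_of_zero_le hpos.le
    convert sub_mem hw.mem_cutSpan
      (hw.mul_cut_mem_cutSpan (b := b) (by omega) (-m) (Or.inl rfl)) using 1
    ext p
    have hiff : 0 < L p ↔ ¬ b * p.2 + 0 ≤ (-m) p.1 := by
      rw [hL, ← hb, AddMonoidHom.neg_apply]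
      constructor <;> intro h <;> linarith
    by_cases h : b * p.2 + 0 ≤ (-m) p.1 <;> simp only [Pi.mul_apply, Pi.sub_apply, hiff, h] <;>
      simp

lemma IsCutTerm.periodic_mul_mem_cutSpan {w : Λ × ℤ → ℚ} (hw : IsCutTerm w) (L : Λ × ℤ →+ ℤ)
    {ψ : ℤ → ℚ} (hψ : IsPeriodic ψ) :
    (fun p => ψ (L p)) * w ∈ cutSpan Λ := by
  set m := L.comp (AddMonoidHom.inl Λ ℤ)
  set α := L (0, 1)
  obtain ⟨hh, hf, ha, l, hε⟩ := hw
  obtain ⟨N, hN, hper⟩ := id hψ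
  have hterm (r : ℕ) (_ : r ∈ Finset.range N) :=
    (IsCutTerm.mk (mul_mem hh (periodic_mem m (hψ.comp_mul_add 1 (α * r))))
      (((isPeriodic_emod hN).map fun s => if s = (r : ℤ) then (1 : ℚ) else 0).isQuasiPoly.mul hf)
      ha l hε).mem_cutSpan
  convert sum_mem hterm using 1
  ext p
  have hres : ψ (L p) = ∑ r ∈ Finset.range N,
      if p.2 % N = r then ψ (1 * m p.1 + α * r) else 0 := by
    have hper' : Function.Periodic (fun x => ψ (1 * m p.1 + α * x)) N := fun x => by
      have shift : 1 * m p.1 + α * (x + N) = 1 * m p.1 + α * x + α * N := by ring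
      exact (congrArg ψ shift).trans (hper.int_mul α _)
    rw [sum_ite_emod_eq hN (fun r => ψ (1 * m p.1 + α * r)), periodic_map_emod hper',
      linearForm_prod_int_apply L p, one_mul]
  simp only [Pi.mul_apply, Finset.sum_apply, hres, Finset.sum_mul]
  refine Finset.sum_congr rfl fun r _ => ?_
  split_ifs <;> ring

lemma mul_mem_cutSpan {F : Λ × ℤ → ℚ} (hF : F ∈ piecewiseQuasiPoly (Λ × ℤ)) :
    ∀ w ∈ cutSpan Λ,
      F * w ∈ cutSpan Λ := by
  induction hF using Algebra.adjoin_induction with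
  | mem F hF =>
    intro w hw
    induction hw using Submodule.span_induction with
    | mem w hw =>
      cases hF with
      | linear L => exact IsCutTerm.linear_mul_mem_cutSpan hw L
      | pos L => exact IsCutTerm.pos_mul_mem_cutSpan hw L
      | periodic L hψ => exact IsCutTerm.periodic_mul_mem_cutSpan hw L hψ
    | zero => simp
    | add v w _ _ hv hw => rw [mul_add]; exact add_mem hv hw
    | smul c w _ hw => rw [mul_smul_comm]; exact Submodule.smul_mem _ c hw
  | algebraMap r =>
    intro w hw
    rw [← Algebra.smul_def]
    exact Submodule.smul_mem _ r hw
  | add F G _ _ hF hG =>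
    intro w hw
    rw [add_mul]
    exact add_mem (hF w hw) (hG w hw)
  | mul F G _ _ hF hG =>
    intro w hw
    rw [mul_assoc]
    exact hF _ (hG w hw)

lemma sum_Ioc_ite_le {f : ℤ → ℚ} {X K : ℤ} (hXK : X ≤ K) :
    ∑ x ∈ Finset.Ioc 0 K, (if x ≤ X then f x else 0) = ∑ x ∈ Finset.Ioc 0 X, f x := by
  rw [← Finset.sum_filter]
  congr 1
  ext x
  simp only [Finset.mem_filter, Finset.mem_Ioc]
  omega

lemma IsCutTerm.exists_sum_Ioc_eventually_eq {w : Λ × ℤ → ℚ} (hw : IsCutTerm w) :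
    ∃ G ∈ piecewiseQuasiPoly Λ, ∀ y, ∀ᶠ K : ℤ in atTop,
      ∑ x ∈ Finset.Ioc 0 K, w (y, x) = G y := by
  obtain @⟨h, hh, f, hf, a, ha, l, ε, hε⟩ := hw
  obtain ⟨g, hg, hdiff⟩ := hf.exists_antidifference
  refine ⟨_, mul_mem (mul_mem hh (pos_mem l))
    (sub_mem ((hg.comp_sub_ediv ha ε).comp_mem l) (const_mem (g 0))), fun y => ?_⟩
  filter_upwards [eventually_ge_atTop ((l y - ε) / a)] with K hK
  have ha' : (0 : ℤ) < a := by exact_mod_cast ha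
  have hcut (x : ℤ) : a * x + ε ≤ l y ↔ x ≤ (l y - ε) / a := by
    rw [Int.le_ediv_iff_mul_le ha']
    constructor <;> intro h <;> linarith
  simp only [hcut, mul_ite, mul_one, mul_zero, sum_Ioc_ite_le hK, Pi.mul_apply, Pi.sub_apply]
  rw [← Finset.mul_sum]
  by_cases hl : 0 < l y
  · rw [if_pos hl,
      sum_Ioc_zero_of_antidifference hdiff (Int.ediv_nonneg (by omega) ha'.le)]
  · rw [if_neg hl, Finset.Ioc_eq_empty, Finset.sum_empty, mul_zero, zero_mul]
    rw [not_lt, ← Int.lt_add_one_iff, Int.ediv_lt_iff_lt_mul ha']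
    rcases hε with rfl | rfl <;> linarith

lemma exists_sum_Ioc_eventually_eq {w : Λ × ℤ → ℚ}
    (hw : w ∈ cutSpan Λ) :
    ∃ G ∈ piecewiseQuasiPoly Λ, ∀ y, ∀ᶠ K : ℤ in atTop,
      ∑ x ∈ Finset.Ioc 0 K, w (y, x) = G y := by
  induction hw using Submodule.span_induction with
  | mem w hw => exact IsCutTerm.exists_sum_Ioc_eventually_eq hw
  | zero => exact ⟨0, zero_mem _, fun y => .of_forall fun K => by simp⟩
  | add v w _ _ hv hw =>
    obtain ⟨G, hG, hv⟩ := hv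
    obtain ⟨H, hH, hw⟩ := hw
    refine ⟨_, add_mem hG hH, fun y => ?_⟩
    filter_upwards [hv y, hw y] with K hv hw
    simp only [Pi.add_apply, Finset.sum_add_distrib, hv, hw]
  | smul c w _ hw =>
    obtain ⟨G, hG, hw⟩ := hw
    refine ⟨_, Subalgebra.smul_mem _ hG c, fun y => ?_⟩
    filter_upwards [hw y] with K hw
    simp only [Pi.smul_apply, ← Finset.smul_sum, hw]

namespace piecewiseQuasiPoly

lemma sum_Ioc_zero_mem {F : Λ × ℤ → ℚ} (hF : F ∈ piecewiseQuasiPoly (Λ × ℤ)) (τ : Λ →+ ℤ) :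
    (fun y => ∑ x ∈ Finset.Ioc 0 (τ y), F (y, x)) ∈ piecewiseQuasiPoly Λ := by
  have hcut := mul_mem_cutSpan hF _ (IsCutTerm.mk (const_mem 1)
    (isPeriodic_const (1 : ℚ)).isQuasiPoly one_pos τ (Or.inl rfl)).mem_cutSpan
  obtain ⟨G, hG, hsum⟩ := exists_sum_Ioc_eventually_eq hcut
  convert hG using 1
  ext y
  obtain ⟨K, hK, hτK⟩ := ((hsum y).and (eventually_ge_atTop (τ y))).exists
  rw [← hK, ← sum_Ioc_ite_le hτK]
  simp

lemma sum_Ioc_mem {F : Λ × ℤ → ℚ} (hF : F ∈ piecewiseQuasiPoly (Λ × ℤ)) (σ τ : Λ →+ ℤ) :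
    (fun y => ∑ x ∈ Finset.Ioc (σ y) (τ y), F (y, x)) ∈ piecewiseQuasiPoly Λ := by
  let shift : Λ × ℤ →+ Λ × ℤ := (AddMonoidHom.fst Λ ℤ).prod
    (AddMonoidHom.snd Λ ℤ + σ.comp (AddMonoidHom.fst Λ ℤ))
  convert sum_Ioc_zero_mem (comp_mem shift hF) (τ - σ) using 1
  ext y
  have himage : Finset.Ioc (σ y) (τ y) =
      (Finset.Ioc 0 (τ y - σ y)).map (addRightEmbedding (σ y)) := by
    rw [Finset.map_add_right_Ioc, zero_add, sub_add_cancel]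
  rw [himage, Finset.sum_map]
  rfl

end piecewiseQuasiPoly

end Summation

section BoxSums

open piecewiseQuasiPoly

/-- Summation over the family of finite sets `s t` preserves piecewise quasi-polynomiality, where
`t` may be any linear form in the remaining variables. -/
def SumClosed {Γ : Type} [AddCommGroup Γ] (s : ℤ → Finset Γ) : Prop :=
  ∀ (Λ : Type) [AddCommGroup Λ] (τ : Λ →+ ℤ), ∀ F ∈ piecewiseQuasiPoly (Λ × Γ),
    (fun y => ∑ z ∈ s (τ y), F (y, z)) ∈ piecewiseQuasiPoly Λ

lemma sumClosed_Ioc (a b : ℤ) : SumClosed fun t => Finset.Ioc (a * t) (b * t) := by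
  intro Λ _ τ F hF
  simpa using sum_Ioc_mem hF (a • τ) (b • τ)

/-- `Fin.cons` as an additive map. -/
def consHom (Γ : Type*) [AddCommGroup Γ] (n : ℕ) : Γ × (Fin n → Γ) →+ (Fin (n + 1) → Γ) where
  toFun p := Fin.cons p.1 p.2
  map_zero' := funext <| Fin.cases rfl fun _ => rfl
  map_add' _ _ := funext <| Fin.cases rfl fun _ => rfl

lemma sum_piFinset_succ {Γ α : Type*} [AddCommMonoid α] {n : ℕ} (s : Finset Γ)
    (f : (Fin (n + 1) → Γ) → α) :
    ∑ z ∈ Fintype.piFinset (fun _ => s), f z =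
      ∑ z ∈ s, ∑ w ∈ Fintype.piFinset (fun _ => s), f (Fin.cons z w) := by
  rw [← Finset.sum_product']
  refine (Finset.sum_equiv (Fin.consEquiv fun _ => Γ) (fun p => ?_) fun _ _ => rfl).symm
  simp [Fin.forall_fin_succ]

lemma SumClosed.piFinset {Γ : Type} [AddCommGroup Γ] {s : ℤ → Finset Γ} (hs : SumClosed s) (n : ℕ) :
    SumClosed fun t => Fintype.piFinset fun _ : Fin n => s t := by
  induction n with
  | zero =>
    intro Λ _ τ F hF
    convert comp_mem ((AddMonoidHom.id Λ).prod (0 : Λ →+ (Fin 0 → Γ))) hF using 1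
    ext y
    simp only [Fintype.piFinset_of_isEmpty, Finset.univ_unique, Finset.sum_singleton]
    exact congrArg F (Prod.ext rfl (Subsingleton.elim _ _))
  | succ n ih =>
    intro Λ _ τ F hF
    let assocCons : (Λ × Γ) × (Fin n → Γ) →+ Λ × (Fin (n + 1) → Γ) :=
      ((AddMonoidHom.id Λ).prodMap (consHom Γ n)).comp AddEquiv.prodAssoc.toAddMonoidHom
    have htail := ih (Λ × Γ) (τ.comp (AddMonoidHom.fst Λ Γ)) _ (comp_mem assocCons hF)
    convert hs Λ τ _ htail using 1
    ext y
    rw [sum_piFinset_succ]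
    rfl

lemma exists_isQuasiPoly_eq_of_pos {F : ℤ → ℚ} (hF : F ∈ piecewiseQuasiPoly ℤ) :
    ∃ g, IsQuasiPoly g ∧ ∀ t > 0, F t = g t := by
  induction hF using Algebra.adjoin_induction with
  | mem F hF =>
    have hform (l : ℤ →+ ℤ) (t : ℤ) : l t = l 1 * t := by
      simpa [mul_comm] using map_zsmul l t 1
    cases hF with
    | linear l =>
      exact ⟨_, (isPeriodic_const (l 1 : ℚ)).isQuasiPoly.mul isQuasiPoly_intCast,
        fun t _ => by simp [hform l t]⟩
    | pos l =>
      refine ⟨_, (isPeriodic_const (if 0 < l 1 then (1 : ℚ) else 0)).isQuasiPoly, fun t ht => ?_⟩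
      simp only [hform l t, mul_pos_iff_of_pos_right ht]
    | periodic l hψ =>
      refine ⟨_, (hψ.comp_mul_add (l 1) 0).isQuasiPoly, fun t _ => ?_⟩
      simp only [hform l t, add_zero]
  | algebraMap r => exact ⟨_, (isPeriodic_const r).isQuasiPoly, fun _ _ => rfl⟩
  | add F G _ _ hF hG =>
    obtain ⟨f, hf, hFf⟩ := hF
    obtain ⟨g, hg, hGg⟩ := hG
    exact ⟨_, hf.add hg, fun t ht => by simp [hFf t ht, hGg t ht]⟩
  | mul F G _ _ hF hG =>
    obtain ⟨f, hf, hFf⟩ := hF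
    obtain ⟨g, hg, hGg⟩ := hG
    exact ⟨_, hf.mul hg, fun t ht => by simp [hFf t ht, hGg t ht]⟩

end BoxSums

section LeadingCoefficients

open Filter Topology

lemma tendsto_eval_div_pow_atTop {Q : ℝ[X]} {m : ℕ} (hQ : Q.natDegree ≤ m) :
    Tendsto (fun x : ℝ => Q.eval x / x ^ m) atTop (𝓝 (Q.coeff m)) := by
  have hmonic : (fun x : ℝ => Q.eval x / x ^ m) = fun x => Q.eval x / (X ^ m : ℝ[X]).eval x := by
    simp
  rw [hmonic]
  rcases hQ.lt_or_eq with hlt | heq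
  · rw [coeff_eq_zero_of_natDegree_lt hlt]
    refine div_tendsto_atTop_zero_of_degree_lt _ _ ?_
    exact degree_lt_degree (by simpa using hlt)
  · subst heq
    by_cases hQ0 : Q = 0
    · simp [hQ0]
    simpa using div_tendsto_atTop_leadingCoeff_div_of_degree_eq Q (X ^ Q.natDegree)
      (by rw [degree_X_pow, degree_eq_natDegree hQ0])

lemma natDegree_le_and_coeff_eq_of_tendsto {Q : ℝ[X]} {m : ℕ} {c : ℝ} {x : ℕ → ℝ}
    (hx : Tendsto x atTop atTop) (hQ : Tendsto (fun j => Q.eval (x j) / x j ^ m) atTop (𝓝 c)) :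
    Q.natDegree ≤ m ∧ Q.coeff m = c := by
  have hdeg : Q.natDegree ≤ m := by
    by_contra! hlt
    have hdegree : (X ^ m : ℝ[X]).degree < Q.degree := degree_lt_degree (by simpa using hlt)
    have hunbounded := (abs_div_tendsto_atTop_atTop_of_degree_gt Q (X ^ m) hdegree
      (pow_ne_zero m X_ne_zero)).comp hx
    refine not_tendsto_nhds_of_tendsto_atTop hunbounded |c| ?_
    simpa [Function.comp_def] using hQ.abs
  exact ⟨hdeg, tendsto_nhds_unique ((tendsto_eval_div_pow_atTop hdeg).comp hx) hQ⟩

lemma coeff_taylor_of_natDegree_le_succ {R : Type*} [CommSemiring R] {Q : R[X]} {e : ℕ}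
    (hQ : Q.natDegree ≤ e + 1) (r : R) :
    (taylor r Q).coeff e = Q.coeff e + (e + 1) * Q.coeff (e + 1) * r := by
  have hdeg : (hasseDeriv e Q).natDegree ≤ 1 :=
    (natDegree_hasseDeriv_le Q e).trans (by omega)
  rw [taylor_coeff, eq_X_add_C_of_natDegree_le_one hdeg]
  simp only [hasseDeriv_coeff, eval_add, eval_mul, eval_C, eval_X, zero_add, Nat.choose_self,
    add_comm 1 e, Nat.choose_succ_self_right, Nat.cast_one, one_mul, Nat.cast_add]
  ring

lemma coeff_taylor_of_natDegree_le {R : Type*} [CommSemiring R] {Q : R[X]} {d : ℕ}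
    (hQ : Q.natDegree ≤ d) (r : R) : (taylor r Q).coeff d = Q.coeff d := by
  simp [coeff_taylor_of_natDegree_le_succ (hQ.trans d.le_succ),
    coeff_eq_zero_of_natDegree_lt (Nat.lt_succ_of_le hQ)]

lemma mul_slope_le_of_convex {u : ℕ → ℝ} (hu : ∀ n, 2 * u (n + 1) ≤ u n + u (n + 2)) (n p : ℕ) :
    p * (u (n + 1) - u n) ≤ u (n + p) - u n := by
  have hmono : Monotone fun n => u (n + 1) - u n :=
    monotone_nat_of_le_succ fun n => by linarith [hu n]
  induction p with
  | zero => simp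
  | succ p ih =>
    have hstep : u (n + 1) - u n ≤ u (n + p + 1) - u (n + p) := hmono (Nat.le_add_right n p)
    push_cast
    rw [← add_assoc n p 1]
    linarith

lemma eq_of_antitone_of_periodic {α : Type*} [PartialOrder α] {s : ℕ → α} {p : ℕ} (hp : 0 < p)
    (hanti : Antitone s) (hper : Function.Periodic s p) (k k' : ℕ) : s k = s k' := by
  have hle (i j : ℕ) : s i ≤ s j :=
    calc s i = s (i + j * p) := (hper.nat_mul j i).symm
      _ ≤ s j := hanti (by nlinarith)
  exact le_antisymm (hle k k') (hle k' k)

variable {F : ℕ → ℝ[X]} {p : ℕ} {u : ℕ → ℝ}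

lemma tendsto_add_mul_atTop (k : ℕ) (hp : 0 < p) :
    Tendsto (fun j : ℕ => k + j * p) atTop atTop :=
  tendsto_atTop_mono (fun j => Nat.le_add_left_of_le (Nat.le_mul_of_pos_right j hp)) tendsto_id

lemma constituent_natDegree_le_and_coeff_eq (hp : 0 < p) (hF : Function.Periodic F p)
    (hu : ∀ n : ℕ, u n = (F n).eval (n : ℝ)) {D : ℕ} {c : ℝ}
    (hlim : Tendsto (fun n : ℕ => u n / (n : ℝ) ^ D) atTop (𝓝 c)) (k : ℕ) :
    (F k).natDegree ≤ D ∧ (F k).coeff D = c := by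
  have hsub := tendsto_add_mul_atTop k hp
  refine natDegree_le_and_coeff_eq_of_tendsto (tendsto_natCast_atTop_atTop.comp hsub) ?_
  refine (hlim.comp hsub).congr fun j => ?_
  have hFj : F (k + j * p) = F k := hF.nat_mul j k
  simp only [Function.comp_apply, hu, hFj]

-- Convexity compares the step `u (n + 1) - u n` with the mean step over a period; at order `n ^ e`
-- this reads `coeff e (F (k + 1)) ≤ coeff e (F k)`.
lemma antitone_coeff_constituent_of_convex (hp : 0 < p) (hF : Function.Periodic F p)
    (hu : ∀ n : ℕ, u n = (F n).eval (n : ℝ)) (hconv : ∀ n, 2 * u (n + 1) ≤ u n + u (n + 2))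
    {e : ℕ} {c : ℝ} (hdeg : ∀ k, (F k).natDegree ≤ e + 1) (hcoeff : ∀ k, (F k).coeff (e + 1) = c) :
    Antitone fun k => (F k).coeff e := by
  refine antitone_nat_of_succ_le fun k => ?_
  set R : ℝ[X] := taylor (p : ℝ) (F k) - F k - (p : ℝ) • (taylor 1 (F (k + 1)) - F k) with hR
  have hR_eval (n : ℕ) (hn : F n = F k) (hn' : F (n + 1) = F (k + 1)) : 0 ≤ R.eval (n : ℝ) := by
    have hslope := mul_slope_le_of_convex hconv n p
    have hnp : F (n + p) = F k := (hF n).trans hn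
    simp only [hu, hn, hn', hnp] at hslope
    simp only [hR, eval_sub, eval_smul, taylor_eval, smul_eq_mul]
    push_cast at hslope ⊢
    linarith
  have hR_top : R.coeff (e + 1) = 0 := by
    simp [hR, coeff_taylor_of_natDegree_le (hdeg _), hcoeff]
  have hR_deg : R.natDegree ≤ e := by
    have htaylor (k : ℕ) (r : ℝ) : (taylor r (F k)).natDegree ≤ e + 1 := by
      simpa only [natDegree_taylor] using hdeg k
    exact natDegree_le_pred (natDegree_sub_le_of_le (natDegree_sub_le_of_le (htaylor _ _) (hdeg _))
      ((natDegree_smul_le _ _).trans (natDegree_sub_le_of_le (htaylor _ _) (hdeg _)))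
      |>.trans (by simp)) hR_top
  have hR_coeff : R.coeff e = p * ((F k).coeff e - (F (k + 1)).coeff e) := by
    simp only [hR, coeff_sub, coeff_smul, coeff_taylor_of_natDegree_le_succ (hdeg _), hcoeff,
      smul_eq_mul]
    ring
  have hsub := tendsto_add_mul_atTop k hp
  have hlim := (tendsto_eval_div_pow_atTop hR_deg).comp (tendsto_natCast_atTop_atTop.comp hsub)
  have hR_nonneg : 0 ≤ R.coeff e := ge_of_tendsto' hlim fun j => div_nonneg
    (hR_eval _ (hF.nat_mul j k) (by rw [add_right_comm]; exact hF.nat_mul j (k + 1)))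
    (pow_nonneg (Nat.cast_nonneg _) _)
  rw [hR_coeff] at hR_nonneg
  have := nonneg_of_mul_nonneg_right hR_nonneg (by exact_mod_cast hp)
  linarith

/-- `u` is a quasi-polynomial of degree `D` whose constituents all have leading coefficient `c`, and
agree also in the coefficient next to it. -/
def IsQuasiPolyWithRigidTop (u : ℕ → ℕ) (D : ℕ) (c : ℝ) : Prop :=
  ∃ p : ℕ, 0 < p ∧ ∃ f : ℕ → ℚ[X],
    (∀ k < p, (f k).degree = (D : WithBot ℕ)) ∧
    (∀ k < p, ∀ k' < p,
      (f k).coeff D = (f k').coeff D ∧ (f k).coeff (D - 1) = (f k').coeff (D - 1)) ∧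
    (∀ k < p, ((f k).coeff D : ℝ) = c) ∧
    (∀ n : ℕ, (u n : ℚ) = (f (n % p)).eval (n : ℚ))

lemma IsQuasiPoly.exists_constituents {g : ℤ → ℚ} (hg : IsQuasiPoly g) :
    ∃ p : ℕ, 0 < p ∧ ∃ f : ℕ → ℚ[X], Function.Periodic f p ∧
      ∀ n : ℕ, g (n + 1) = (f n).eval (n : ℚ) := by
  obtain ⟨P, ⟨p, hp, hP⟩, hg⟩ := hg
  refine ⟨p, hp, fun n => taylor 1 (P (n + 1)), fun n => ?_, fun n => ?_⟩
  · simp only [Nat.cast_add, add_right_comm _ (p : ℤ) 1, hP _]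
  · simp [hg, taylor_eval]

theorem isQuasiPolyWithRigidTop_of_convex {u : ℕ → ℕ} {g : ℤ → ℚ} (hg : IsQuasiPoly g)
    (hug : ∀ n : ℕ, (u n : ℚ) = g (n + 1)) (hconv : ∀ n, 2 * u (n + 1) ≤ u n + u (n + 2))
    {D : ℕ} (hD : 0 < D) {c : ℝ} (hc : c ≠ 0)
    (hlim : Tendsto (fun n : ℕ => (u n : ℝ) / (n : ℝ) ^ D) atTop (𝓝 c)) :
    IsQuasiPolyWithRigidTop u D c := by
  obtain ⟨e, rfl⟩ := Nat.exists_eq_add_of_lt hD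
  obtain ⟨p, hp, f, hf, hgf⟩ := hg.exists_constituents
  let F (k : ℕ) : ℝ[X] := (f k).map (algebraMap ℚ ℝ)
  have hF : Function.Periodic F p := fun k => by simp only [F, hf k]
  have hu (n : ℕ) : (u n : ℝ) = (F n).eval (n : ℝ) := by
    have huf : (u n : ℚ) = (f n).eval (n : ℚ) := (hug n).trans (hgf n)
    rw [eval_natCast_map, ← huf, map_natCast]
  have hconst := constituent_natDegree_le_and_coeff_eq hp hF hu hlim
  have hanti := antitone_coeff_constituent_of_convex hp hF hu (by exact_mod_cast hconv)
    (fun k => (hconst k).1) (fun k => (hconst k).2)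
  have hsecond := eq_of_antitone_of_periodic hp hanti (fun k => by simp only [hF k])
  have hcoeff (k : ℕ) : ((f k).coeff (0 + e + 1) : ℝ) = c := by
    simpa [F] using (hconst k).2
  refine ⟨p, hp, f, fun k _ => ?_, fun k _ k' _ => ⟨?_, ?_⟩, fun k _ => hcoeff k, fun n => ?_⟩
  · refine degree_eq_of_le_of_coeff_ne_zero (natDegree_le_iff_degree_le.1 ?_) fun h => hc ?_
    · simpa [F] using (hconst k).1
    · rw [← hcoeff k, h, Rat.cast_zero]
  · exact_mod_cast (hcoeff k).trans (hcoeff k').symm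
  · have := hsecond k k'
    simpa [F] using this
  · rw [hf.map_mod_nat, hug, hgf]

end LeadingCoefficients

section Configurations

variable {α β : Type*}

/-- The `q`-element subsets of `D` any two distinct points of which are related by `r`. -/
def configurations (D : Set α) (r : α → α → Prop) (q : ℕ) : Set (Finset α) :=
  {S | S.card = q ∧ ↑S ⊆ D ∧ (S : Set α).Pairwise r}

lemma configurations_mono {D D' : Set α} (h : D ⊆ D') (r : α → α → Prop) (q : ℕ) :
    configurations D r q ⊆ configurations D' r q :=
  fun _ hS => ⟨hS.1, hS.2.1.trans h, hS.2.2⟩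

lemma finite_configurations {D : Set α} (hD : D.Finite) (r : α → α → Prop) (q : ℕ) :
    (configurations D r q).Finite :=
  hD.toFinset.powerset.finite_toSet.subset fun _ hS =>
    Finset.mem_coe.2 (Finset.mem_powerset.2 (hD.subset_toFinset.2 hS.2.1))

lemma encard_configurations_preimage (e : α ≃ β) (D : Set β) (r : β → β → Prop) (q : ℕ) :
    (configurations (e ⁻¹' D) (fun x y => r (e x) (e y)) q).encard =
      (configurations D r q).encard := by
  have hpreimage : configurations (e ⁻¹' D) (fun x y => r (e x) (e y)) q =
      e.finsetCongr ⁻¹' configurations D r q := by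
    ext S
    have hpairwise : (e '' S).Pairwise r ↔ (S : Set α).Pairwise fun x y => r (e x) (e y) :=
      e.injective.injOn.pairwise_image
    simp [configurations, hpairwise]
  rw [hpreimage, Set.encard_preimage_of_bijective e.finsetCongr.bijective]

end Configurations

section Convexity

variable {Λ κ : Type*} [AddCommGroup Λ]

/-- The points satisfying the strict linear constraints `ℓ e z < b e`. -/
def region (ℓ : κ → Λ →+ ℤ) (b : κ → ℤ) : Set Λ := {z | ∀ e, ℓ e z < b e}

lemma region_mono (ℓ : κ → Λ →+ ℤ) : Monotone (region ℓ) :=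
  fun _ _ hbc _ hz e => (hz e).trans_le (hbc e)

lemma encard_configurations_region_translate (ℓ : κ → Λ →+ ℤ) (b : κ → ℤ) {r : Λ → Λ → Prop}
    (hr : ∀ v x y, r (v + x) (v + y) ↔ r x y) (q : ℕ) (v : Λ) :
    (configurations (region ℓ fun e => b e + ℓ e v) r q).encard =
      (configurations (region ℓ b) r q).encard := by
  rw [← encard_configurations_preimage (Equiv.addLeft v)]
  congr 2
  · ext z
    simp [region, add_comm (ℓ _ v)]
  · ext x y
    exact hr v x y

lemma vadd_mem_configurations [DecidableEq Λ] {ℓ : κ → Λ →+ ℤ} {c h : κ → ℤ}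
    {r : Λ → Λ → Prop} (hr : ∀ v x y, r (v + x) (v + y) ↔ r x y) {q : ℕ} {w : Λ}
    (hw : ∀ e, ℓ e w ≤ h e) {S : Finset Λ} (hS : S ∈ configurations (region ℓ c) r q) :
    w +ᵥ S ∈ configurations (region ℓ (c + h)) r q := by
  refine ⟨(Finset.card_vadd_finset w S).trans hS.1, ?_, ?_⟩
  · rw [Finset.coe_vadd_finset]
    rintro _ ⟨z, hz, rfl⟩ e
    simp only [vadd_eq_add, Pi.add_apply, map_add]
    linarith [hS.2.1 hz e, hw e]
  · rw [Finset.coe_vadd_finset]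
    rintro _ ⟨x, hx, rfl⟩ _ ⟨y, hy, rfl⟩ hxy
    exact (hr w x y).2 (hS.2.2 hx hy (ne_of_apply_ne _ hxy))

variable [LinearOrder κ]

/-- `e` is the first index at which some point of `S` violates its constraint `ℓ e z < b e`. -/
def IsFirstViolation (ℓ : κ → Λ →+ ℤ) (b : κ → ℤ) (S : Finset Λ) (e : κ) : Prop :=
  (∃ z ∈ S, b e ≤ ℓ e z) ∧ ∀ e' < e, ∀ z ∈ S, ℓ e' z < b e'

variable {ℓ : κ → Λ →+ ℤ} {b : κ → ℤ} {S : Finset Λ} {e e' : κ}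

lemma exists_isFirstViolation [WellFoundedLT κ] (hS : ¬ ↑S ⊆ region ℓ b) :
    ∃ e, IsFirstViolation ℓ b S e := by
  have hviolated : ∃ e, ∃ z ∈ S, b e ≤ ℓ e z := by
    obtain ⟨z, hz, hzb⟩ := Set.not_subset.1 hS
    simp only [region, Set.mem_ofPred_eq, not_forall, not_lt] at hzb
    exact hzb.imp fun e he => ⟨z, hz, he⟩
  obtain ⟨e, he, hmin⟩ := wellFounded_lt.has_min {e | ∃ z ∈ S, b e ≤ ℓ e z} hviolated
  exact ⟨e, he, fun e' he' z hz => lt_of_not_ge fun h => hmin e' ⟨z, hz, h⟩ he'⟩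

lemma IsFirstViolation.not_subset (he : IsFirstViolation ℓ b S e) : ¬ ↑S ⊆ region ℓ b :=
  fun hS => he.1.elim fun _ hz => (hS hz.1 e).not_ge hz.2

lemma IsFirstViolation.unique (he : IsFirstViolation ℓ b S e) (he' : IsFirstViolation ℓ b S e') :
    e = e' := by
  have hle {i j : κ} (hi : IsFirstViolation ℓ b S i) (hj : IsFirstViolation ℓ b S j) : i ≤ j := by
    obtain ⟨z, hz, hzj⟩ := hj.1
    exact le_of_not_gt fun hji => (hi.2 j hji z hz).not_ge hzj
  exact le_antisymm (hle he he') (hle he' he)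

lemma IsFirstViolation.vadd [DecidableEq Λ] (he : IsFirstViolation ℓ b S e) {h : κ → ℤ} {w : Λ}
    (hwe : ℓ e w = h e) (hw : ∀ e', ℓ e' w ≤ h e') : IsFirstViolation ℓ (b + h) (w +ᵥ S) e := by
  obtain ⟨⟨z, hz, hze⟩, hfirst⟩ := he
  refine ⟨⟨w + z, Finset.vadd_mem_vadd_finset hz, ?_⟩, fun e' he' => ?_⟩
  · simp only [Pi.add_apply, map_add, hwe]
    linarith
  · simp only [Finset.vadd_finset_def, Finset.forall_mem_image]
    intro z hz
    simp only [vadd_eq_add, Pi.add_apply, map_add]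
    linarith [hfirst e' he' z hz, hw e']

-- Moving a configuration of `C(c) \ C(b)` by the `w e` of its first violated constraint `e` keeps
-- `e` the first violated constraint, so the move is injective.
theorem encard_configurations_region_add_le [WellFoundedLT κ] {c h : κ → ℤ} (hbc : b ≤ c)
    {w : κ → Λ} (hw_eq : ∀ e, ℓ e (w e) = h e) (hw_le : ∀ e e', ℓ e' (w e) ≤ h e')
    {r : Λ → Λ → Prop} (hr : ∀ v x y, r (v + x) (v + y) ↔ r x y) (q : ℕ) :
    (configurations (region ℓ c) r q).encard + (configurations (region ℓ (b + h)) r q).encard ≤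
      (configurations (region ℓ b) r q).encard +
        (configurations (region ℓ (c + h)) r q).encard := by
  classical
  rcases isEmpty_or_nonempty κ with hκ | hκ
  · rw [Subsingleton.elim b c]
  let C (b : κ → ℤ) : Set (Finset Λ) := configurations (region ℓ b) r q
  have hfirst (S) (hS : S ∈ C c \ C b) : ∃ e, IsFirstViolation ℓ b S e :=
    exists_isFirstViolation fun hsub => hS.2 ⟨hS.1.1, hsub, hS.1.2.2⟩
  choose! first hfirst using hfirst
  have hmoved {S} (hS : S ∈ C c \ C b) :
      IsFirstViolation ℓ (b + h) (w (first S) +ᵥ S) (first S) :=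
    (hfirst S hS).vadd (hw_eq _) (hw_le _)
  have hmaps : Set.MapsTo (fun S => w (first S) +ᵥ S) (C c \ C b) (C (c + h) \ C (b + h)) :=
    fun S hS => ⟨vadd_mem_configurations hr (hw_le _) hS.1, fun hmem =>
      (hmoved hS).not_subset hmem.2.1⟩
  have hinj : Set.InjOn (fun S => w (first S) +ᵥ S) (C c \ C b) := by
    intro S hS S' hS' heq
    dsimp only at heq
    have hsame : first S = first S' := (hmoved hS).unique (heq ▸ hmoved hS')
    rwa [hsame, vadd_left_cancel_iff] at heq
  calc (C c).encard + (C (b + h)).encard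
      = (C b).encard + ((C c \ C b).encard + (C (b + h)).encard) := by
        rw [← Set.encard_sdiff_add_encard_of_subset
          (configurations_mono (region_mono ℓ hbc) r q : C b ⊆ C c)]
        ring
    _ ≤ (C b).encard + ((C (c + h) \ C (b + h)).encard + (C (b + h)).encard) := by
        gcongr (C b).encard + (?_ + (C (b + h)).encard)
        exact Set.encard_le_encard_of_injOn hmaps hinj
    _ = (C b).encard + (C (c + h)).encard := by
        rw [Set.encard_sdiff_add_encard_of_subset
          (configurations_mono (region_mono ℓ (by gcongr)) r q : C (b + h) ⊆ C (c + h))]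

-- Move the constraints for `t` and `t + 1` by a point `v` with `ℓ e v ≤ h e` for all `e`.
theorem two_mul_encard_configurations_region_le [WellFoundedLT κ] {h : κ → ℤ} {w : κ → Λ}
    (hw_eq : ∀ e, ℓ e (w e) = h e) (hw_le : ∀ e e', ℓ e' (w e) ≤ h e') {v : Λ}
    (hv : ∀ e, ℓ e v ≤ h e) {r : Λ → Λ → Prop} (hr : ∀ v x y, r (v + x) (v + y) ↔ r x y)
    (q : ℕ) (t : ℤ) :
    2 * (configurations (region ℓ ((t + 1) • h)) r q).encard ≤
      (configurations (region ℓ (t • h)) r q).encard +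
        (configurations (region ℓ ((t + 2) • h)) r q).encard := by
  have hsplit := encard_configurations_region_add_le (b := fun e => (t • h) e + ℓ e v)
    (c := (t + 1) • h) (fun e => by simpa [add_mul] using hv e) hw_eq hw_le hr q
  have hb : (fun e => (t • h) e + ℓ e v) + h = fun e => ((t + 1) • h) e + ℓ e v := by
    ext e
    simp only [Pi.add_apply, Pi.smul_apply, smul_eq_mul]
    ring
  have hc : (t + 1) • h + h = (t + 2) • h := by
    module
  rw [hb, hc, encard_configurations_region_translate ℓ _ hr,
    encard_configurations_region_translate ℓ _ hr, ← two_mul] at hsplit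
  exact hsplit

end Convexity

section HalfSpaces

open scoped NNReal

lemma exists_nonneg_mul_le_iff {κ : Type*} (Φ : Finset κ) (s y : κ → ℝ) :
    (∃ a : ℝ, 0 ≤ a ∧ ∀ i ∈ Φ, a * s i ≤ y i) ↔
      (∀ i ∈ Φ, 0 ≤ s i → 0 ≤ y i) ∧
        ∀ i ∈ Φ, ∀ j ∈ Φ, 0 < s i → s j < 0 → 0 ≤ s i * y j - s j * y i := by
  classical
  constructor
  · rintro ⟨a, ha, hay⟩
    refine ⟨fun i hi hsi => (mul_nonneg ha hsi).trans (hay i hi), fun i hi j hj hsi hsj => ?_⟩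
    nlinarith [mul_le_mul_of_nonneg_left (hay j hj) hsi.le,
      mul_le_mul_of_nonpos_left (hay i hi) hsj.le]
  · rintro ⟨hnonneg, hcross⟩
    let lower : Finset ℝ := insert 0 ((Φ.filter fun j => s j < 0).image fun j => y j / s j)
    have hle {l : ℝ} (hl : l ∈ lower) : l ≤ lower.max' ⟨0, by simp [lower]⟩ := lower.le_max' l hl
    refine ⟨lower.max' ⟨0, by simp [lower]⟩, hle (by simp [lower]), fun i hi => ?_⟩
    rcases lt_or_ge (s i) 0 with hsi | hsi
    · rw [← div_le_iff_of_neg hsi]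
      exact hle (Finset.mem_insert_of_mem (Finset.mem_image_of_mem _ (by simp [hi, hsi])))
    · have hmax := lower.max'_mem ⟨0, by simp [lower]⟩
      rcases Finset.mem_insert.1 hmax with h0 | hj
      · simpa [h0] using hnonneg i hi hsi
      · obtain ⟨j, hj, hj_eq⟩ := Finset.mem_image.1 hj
        obtain ⟨hj, hsj⟩ := Finset.mem_filter.1 hj
        rw [← hj_eq]
        rcases hsi.eq_or_lt with hsi0 | hsi
        · simpa [← hsi0] using hnonneg i hi hsi0.le
        · rw [div_mul_eq_mul_div, div_le_iff_of_neg hsj]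
          linarith [hcross i hi j hj hsi hsj]

variable {ι : Type*}

/-- The real vector with the same coordinates as an integer vector. -/
def realVec : (ι → ℤ) →+* (ι → ℝ) := (Int.castRingHom ℝ).compLeft ι

@[simp]
lemma realVec_apply (v : ι → ℤ) (i : ι) : realVec v i = v i := rfl

variable [Fintype ι]

@[simp]
lemma realVec_dotProduct (v w : ι → ℤ) : realVec v ⬝ᵥ realVec w = ((v ⬝ᵥ w : ℤ) : ℝ) :=
  ((Int.castRingHom ℝ).map_dotProduct v w).symm

lemma mem_span_insert_iff {E : Type*} [AddCommGroup E] [Module ℝ E] {x w : E} {s : Set E} :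
    x ∈ Submodule.span ℝ≥0 (insert w s) ↔
      ∃ a : ℝ, 0 ≤ a ∧ x - a • w ∈ Submodule.span ℝ≥0 s := by
  rw [Submodule.mem_span_insert]
  constructor
  · rintro ⟨a, z, hz, rfl⟩
    exact ⟨a, a.2, by simpa [NNReal.smul_def] using hz⟩
  · rintro ⟨a, ha, hx⟩
    exact ⟨a.toNNReal, _, hx, by simp [NNReal.smul_def, Real.coe_toNNReal a ha]⟩

-- Fourier–Motzkin elimination of the coefficient of each new generator.
theorem exists_span_eq_inter_halfSpaces (W : Finset (ι → ℤ)) :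
    ∃ Φ : Finset (ι → ℤ), ∀ x : ι → ℝ,
      x ∈ Submodule.span ℝ≥0 (realVec '' (W : Set (ι → ℤ))) ↔ ∀ φ ∈ Φ, 0 ≤ realVec φ ⬝ᵥ x := by
  classical
  induction W using Finset.induction_on with
  | empty =>
    let unit (i : ι) : ι → ℤ := Pi.single i 1
    refine ⟨Finset.univ.image unit ∪ Finset.univ.image (-unit), fun x => ?_⟩
    have hunit (i : ι) : realVec (unit i) ⬝ᵥ x = x i := by
      have : realVec (unit i) = Pi.single i 1 := by
        ext j
        simp [unit, Pi.single_apply]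
      rw [this, single_one_dotProduct]
    simp only [Finset.coe_empty, Set.image_empty, Submodule.span_empty, Submodule.mem_bot,
      Finset.forall_mem_union, Finset.forall_mem_image, Finset.mem_univ, true_imp_iff, Pi.neg_apply,
      map_neg, neg_dotProduct, hunit, funext_iff, Pi.zero_apply, ← forall_and]
    exact forall_congr' fun i => ⟨fun h => by simp [h], fun h => by linarith⟩
  | insert w W _ ih =>
    obtain ⟨Φ, hΦ⟩ := ih
    let kept := Φ.filter fun φ => 0 ≤ φ ⬝ᵥ w
    let crossed := ((Φ ×ˢ Φ).filter fun p => 0 < p.1 ⬝ᵥ w ∧ p.2 ⬝ᵥ w < 0).image fun p =>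
      (p.1 ⬝ᵥ w) • p.2 - (p.2 ⬝ᵥ w) • p.1
    refine ⟨kept ∪ crossed, fun x => ?_⟩
    rw [Finset.coe_insert, Set.image_insert_eq, mem_span_insert_iff]
    simp only [hΦ, dotProduct_sub, dotProduct_smul, realVec_dotProduct, sub_nonneg, smul_eq_mul]
    rw [exists_nonneg_mul_le_iff Φ (fun φ => ((φ ⬝ᵥ w : ℤ) : ℝ)) fun φ => realVec φ ⬝ᵥ x]
    simp only [kept, crossed, Finset.forall_mem_union, Finset.forall_mem_image]
    simp only [Finset.mem_filter, Finset.mem_product, Prod.forall, map_sub, map_zsmul,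
      sub_dotProduct, smul_dotProduct, and_imp, Int.cast_nonneg_iff, Int.cast_pos, Int.cast_lt_zero]
    simp only [zsmul_eq_mul]
    exact and_congr Iff.rfl ⟨fun h i j hi hj => h i hi j hj, fun h i hi j hj => h i j hi hj⟩

variable {d : ℕ}

lemma mem_convexHull_iff_cons_mem_span {V : Finset (Fin d → ℝ)} {x : Fin d → ℝ} :
    x ∈ convexHull ℝ (V : Set (Fin d → ℝ)) ↔
      (Fin.cons 1 x : Fin (d + 1) → ℝ) ∈
        Submodule.span ℝ≥0 ((fun v => (Fin.cons 1 v : Fin (d + 1) → ℝ)) '' V) := by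
  have hcons (c : (Fin d → ℝ) → ℝ) :
      ∑ v ∈ V, c v • (Fin.cons 1 v : Fin (d + 1) → ℝ) = Fin.cons 1 x ↔
        ∑ v ∈ V, c v = 1 ∧ ∑ v ∈ V, c v • v = x := by
    simp [funext_iff, Fin.forall_fin_succ, Finset.sum_apply]
  rw [Finset.mem_convexHull', Submodule.mem_span_image_finset_iff_exists_fun']
  constructor
  · rintro ⟨c, hc, hsum⟩
    refine ⟨fun v => (c v).toNNReal, ?_⟩
    rw [← (hcons c).2 hsum]
    exact Finset.sum_congr rfl fun v hv => by rw [NNReal.smul_def, Real.coe_toNNReal _ (hc v hv)]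
  · rintro ⟨c, hc⟩
    exact ⟨fun v => c v, fun v _ => (c v).2, (hcons _).1 hc⟩

lemma exists_convexHull_eq_inter_affine (V : Finset (Fin d → ℤ)) :
    ∃ Φ : Finset (Fin (d + 1) → ℤ), ∀ x : Fin d → ℝ,
      x ∈ convexHull ℝ (realVec '' (V : Set (Fin d → ℤ))) ↔
        ∀ φ ∈ Φ, 0 ≤ φ 0 + realVec (Fin.tail φ) ⬝ᵥ x := by
  classical
  obtain ⟨Φ, hΦ⟩ := exists_span_eq_inter_halfSpaces
    (V.image fun v => (Fin.cons 1 v : Fin (d + 1) → ℤ))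
  refine ⟨Φ, fun x => ?_⟩
  have hcons (v : Fin d → ℤ) :
      (Fin.cons 1 (realVec v) : Fin (d + 1) → ℝ) = realVec (Fin.cons 1 v : Fin (d + 1) → ℤ) :=
    funext <| Fin.cases (by simp) fun _ => by simp
  have hlift : (fun v => (Fin.cons 1 v : Fin (d + 1) → ℝ)) '' (V.image realVec) =
      realVec '' (V.image fun v => (Fin.cons 1 v : Fin (d + 1) → ℤ)) := by
    simp only [Finset.coe_image, Set.image_image, hcons]
  rw [← Finset.coe_image, mem_convexHull_iff_cons_mem_span, hlift, hΦ]
  refine forall₂_congr fun φ _ => ?_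
  simp [dotProduct, Fin.sum_univ_succ, Fin.tail]

lemma exists_convexHull_eq_inter_halfSpaces {V : Finset (Fin d → ℤ)} (hV : V.Nonempty) :
    ∃ A : Finset (Fin d → ℤ), 0 ∉ A ∧ ∀ x : Fin d → ℝ,
      x ∈ convexHull ℝ (realVec '' (V : Set (Fin d → ℤ))) ↔
        ∀ a ∈ A, ∃ v ∈ V, realVec a ⬝ᵥ x ≤ (a ⬝ᵥ v : ℤ) := by
  classical
  obtain ⟨Φ, hΦ⟩ := exists_convexHull_eq_inter_affine V
  have hΦV : ∀ φ ∈ Φ, ∀ v ∈ V, 0 ≤ φ 0 + Fin.tail φ ⬝ᵥ v := fun φ hφ v hv => by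
    have := (hΦ (realVec v)).1 (subset_convexHull _ _ ⟨v, hv, rfl⟩) φ hφ
    rw [realVec_dotProduct] at this
    exact_mod_cast this
  refine ⟨(Φ.image fun φ => -Fin.tail φ).erase 0, Finset.notMem_erase _ _, fun x => ⟨?_, ?_⟩⟩
  · intro hx a _
    have hconvex : ConvexOn ℝ Set.univ fun x => realVec a ⬝ᵥ x :=
      (dotProductBilin ℝ ℝ (realVec a)).convexOn convex_univ
    obtain ⟨_, ⟨v, hv, rfl⟩, hle⟩ := hconvex.exists_ge_of_mem_convexHull (Set.subset_univ _) hx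
    exact ⟨v, hv, hle.trans_eq (realVec_dotProduct a v)⟩
  · refine fun hx => (hΦ x).2 fun φ hφ => ?_
    by_cases hzero : Fin.tail φ = 0
    · obtain ⟨v, hv⟩ := hV
      simpa [hzero] using hΦV φ hφ v hv
    · obtain ⟨v, hv, hle⟩ := hx (-Fin.tail φ)
        (Finset.mem_erase.2 ⟨neg_ne_zero.2 hzero, Finset.mem_image_of_mem _ hφ⟩)
      have : (0 : ℝ) ≤ φ 0 + (Fin.tail φ ⬝ᵥ v : ℤ) := by exact_mod_cast hΦV φ hφ v hv
      simp only [map_neg, neg_dotProduct, Int.cast_neg] at hle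
      linarith

lemma interior_dotProduct_le {a : ι → ℝ} (ha : a ≠ 0) (c : ℝ) :
    interior {x : ι → ℝ | a ⬝ᵥ x ≤ c} = {x | a ⬝ᵥ x < c} := by
  have hsurj : Function.Surjective (dotProductBilin ℝ ℝ a) :=
    LinearMap.surjective fun h => ha (dotProduct_eq_zero _ fun x => by
      simpa using LinearMap.congr_fun h x)
  have hopen := (dotProductBilin ℝ ℝ a).isOpenMap_of_finiteDimensional hsurj
  have := hopen.preimage_interior_eq_interior_preimage
    (LinearMap.continuous_of_finiteDimensional _) (Set.Iic c)
  rw [interior_Iic] at this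
  exact this.symm

theorem exists_interior_convexHull_eq_inter_halfSpaces {V : Finset (Fin d → ℤ)} (hV : V.Nonempty) :
    ∃ (k : ℕ) (a v : Fin k → Fin d → ℤ), (∀ e, v e ∈ V) ∧ (∀ e, ∀ w ∈ V, a e ⬝ᵥ w ≤ a e ⬝ᵥ v e) ∧
      ∀ x : Fin d → ℝ, x ∈ interior (convexHull ℝ (realVec '' (V : Set (Fin d → ℤ)))) ↔
        ∀ e, realVec (a e) ⬝ᵥ x < (a e ⬝ᵥ v e : ℤ) := by
  obtain ⟨A, hA0, hA⟩ := exists_convexHull_eq_inter_halfSpaces hV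
  have hmax (a : A) : ∃ v ∈ V, ∀ w ∈ V, a.1 ⬝ᵥ w ≤ a.1 ⬝ᵥ v := V.exists_max_image _ hV
  choose v hvV hv using hmax
  have hhull : convexHull ℝ (realVec '' (V : Set (Fin d → ℤ))) =
      ⋂ a : A, {x | realVec a.1 ⬝ᵥ x ≤ (a.1 ⬝ᵥ v a : ℤ)} := by
    ext x
    simp only [hA, Set.mem_iInter, Set.mem_ofPred_eq, Subtype.forall]
    refine forall₂_congr fun a ha => ⟨?_, fun h => ⟨v ⟨a, ha⟩, hvV _, h⟩⟩
    rintro ⟨w, hw, hle⟩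
    exact hle.trans (by exact_mod_cast hv ⟨a, ha⟩ w hw)
  have hne (a : A) : realVec a.1 ≠ 0 := fun h =>
    hA0 (by convert a.2; exact (funext fun i => by simpa using congrFun h i).symm)
  refine ⟨A.card, fun e => A.equivFin.symm e, fun e => v (A.equivFin.symm e), fun e => hvV _,
    fun e => hv _, fun x => ?_⟩
  simp only [hhull, interior_iInter_of_finite, interior_dotProduct_le (hne _), Set.mem_iInter,
    Set.mem_ofPred_eq]
  exact (A.equivFin.symm.forall_congr_right (q := fun a => realVec a.1 ⬝ᵥ x < _)).symm

end HalfSpaces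

section Tuples

variable {α : Type*} {q : ℕ}

lemma card_eq_factorial_of_mem_iff_image_eq [DecidableEq α] {S : Finset α} (hS : S.card = q)
    {T : Finset (Fin q → α)} (hT : ∀ z, z ∈ T ↔ Finset.univ.image z = S) :
    T.card = q.factorial := by
  have hT_eq : T = Finset.univ.image fun (e : Fin q ≃ S) i => (e i : α) := by
    ext z
    simp only [hT, Finset.mem_image, Finset.mem_univ, true_and]
    constructor
    · intro hz
      have hmem (i : Fin q) : z i ∈ S := hz ▸ Finset.mem_image_of_mem z (Finset.mem_univ i)
      have hsurj : Function.Surjective fun i => (⟨z i, hmem i⟩ : S) := fun ⟨y, hy⟩ => by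
        obtain ⟨i, -, hi⟩ := Finset.mem_image.1 (hz.symm ▸ hy)
        exact ⟨i, Subtype.ext hi⟩
      have hbij := (Fintype.bijective_iff_surjective_and_card _).2 ⟨hsurj, by simp [hS]⟩
      exact ⟨Equiv.ofBijective _ hbij, rfl⟩
    · rintro ⟨e, rfl⟩
      ext y
      simp only [Finset.mem_image, Finset.mem_univ, true_and]
      exact ⟨fun ⟨i, hi⟩ => hi ▸ (e i).2, fun hy => ⟨e.symm ⟨y, hy⟩, by simp⟩⟩
  rw [hT_eq, Finset.card_image_of_injective]
  · rw [Finset.card_univ, Fintype.card_equiv (S.equivFinOfCardEq hS).symm, Fintype.card_fin]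
  · exact fun e e' h => Equiv.ext fun i => Subtype.ext (congrFun h i)

variable (D : Finset α) (r : α → α → Prop) [DecidableRel r]

/-- The `q`-tuples of points of `D` whose entries at distinct positions are related by `r`. -/
def tuples (q : ℕ) : Finset (Fin q → α) :=
  {z ∈ Fintype.piFinset fun _ => D | ∀ i j, i ≠ j → r (z i) (z j)}

lemma card_tuples_le : (tuples D r q).card ≤ D.card ^ q :=
  (Finset.card_filter_le _ _).trans_eq (by simp)

lemma card_tuples_eq (hr : ∀ x, ¬ r x x) :
    (tuples D r q).card = (configurations (D : Set α) r q).ncard * q.factorial := by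
  classical
  have hfinite := finite_configurations D.finite_toSet r q
  have hmaps : ∀ z ∈ tuples D r q, Finset.univ.image z ∈ hfinite.toFinset := by
    intro z hz
    obtain ⟨hzD, hzr⟩ := Finset.mem_filter.1 hz
    have hinj : Function.Injective z := fun i j hij => by_contra fun hne =>
      hr (z j) (by simpa [hij] using hzr i j hne)
    rw [hfinite.mem_toFinset]
    refine ⟨by simp [Finset.card_image_of_injective _ hinj], ?_, ?_⟩
    · simpa [Set.range_subset_iff] using hzD
    · simpa using Pairwise.range_pairwise fun i j hne => hzr i j hne
  rw [Finset.card_eq_sum_card_fiberwise hmaps, Set.ncard_eq_toFinset_card _ hfinite,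
    Finset.sum_const_nat]
  intro S hS
  obtain ⟨hScard, hSD, hSr⟩ := hfinite.mem_toFinset.1 hS
  refine card_eq_factorial_of_mem_iff_image_eq hScard fun z => ?_
  rw [Finset.mem_filter, and_iff_right_iff_imp]
  rintro rfl
  have hinj : Set.InjOn z (Finset.univ : Finset (Fin q)) :=
    Finset.card_image_iff.1 (by rw [hScard, Finset.card_univ, Fintype.card_fin])
  have hmem (i : Fin q) : z i ∈ Finset.univ.image z := Finset.mem_image_of_mem z (Finset.mem_univ i)
  exact Finset.mem_filter.2 ⟨Fintype.mem_piFinset.2 fun i => hSD (hmem i), fun i j hij =>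
    hSr (hmem i) (hmem j) (hinj.ne (by simp) (by simp) hij)⟩

lemma card_tuples_succ : (tuples D r (q + 1)).card =
    ∑ w ∈ tuples D r q, {y ∈ D | ∀ i, r y (w i) ∧ r (w i) y}.card := by
  simp only [tuples, Finset.card_filter, Finset.sum_filter]
  rw [sum_piFinset_succ, Finset.sum_comm]
  refine Finset.sum_congr rfl fun w _ => ?_
  have hcons (y : α) :
      (∀ i j, i ≠ j → r ((Fin.cons y w : Fin (q + 1) → α) i) ((Fin.cons y w : Fin (q + 1) → α) j)) ↔
      (∀ i j, i ≠ j → r (w i) (w j)) ∧ ∀ i, r y (w i) ∧ r (w i) y := by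
    simp only [Fin.forall_fin_succ, Fin.cons_zero, Fin.cons_succ, ne_eq, not_true_eq_false,
      Fin.succ_ne_zero, (Fin.succ_ne_zero _).symm, Fin.succ_inj, not_false_eq_true, true_imp_iff,
      false_imp_iff, true_and, forall_and]
    tauto
  simp only [hcons, ite_and, Finset.sum_ite_irrel, Finset.sum_const_zero]

variable {D r}

lemma pow_le_card_tuples {A : ℕ}
    (hA : ∀ x ∈ D, {y ∈ D | ¬ (r y x ∧ r x y)}.card ≤ A) (q : ℕ) :
    (D.card - q * A) ^ q ≤ (tuples D r q).card := by
  classical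
  induction q with
  | zero => simp [tuples]
  | succ q ih =>
    have hextend (w) (hw : w ∈ tuples D r q) :
        D.card - q * A ≤ {y ∈ D | ∀ i, r y (w i) ∧ r (w i) y}.card := by
      have hwD (i : Fin q) : w i ∈ D := Fintype.mem_piFinset.1 (Finset.mem_filter.1 hw).1 i
      have hcover : {y ∈ D | ¬ ∀ i, r y (w i) ∧ r (w i) y} ⊆
          Finset.univ.biUnion fun i => {y ∈ D | ¬ (r y (w i) ∧ r (w i) y)} := fun y hy => by
        simpa only [Finset.mem_filter, Finset.mem_biUnion, Finset.mem_univ, true_and, not_forall,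
          exists_and_left] using hy
      have hlost := (Finset.card_le_card hcover).trans
        (Finset.card_biUnion_le_card_mul _ _ A fun i _ => hA (w i) (hwD i))
      rw [Finset.card_univ, Fintype.card_fin] at hlost
      have := D.card_filter_add_card_filter_not fun y => ∀ i, r y (w i) ∧ r (w i) y
      omega
    calc (D.card - (q + 1) * A) ^ (q + 1)
        ≤ (D.card - q * A) ^ (q + 1) := by gcongr; omega
      _ ≤ (tuples D r q).card * (D.card - q * A) := by rw [pow_succ]; gcongr
      _ ≤ (tuples D r (q + 1)).card := by
        rw [card_tuples_succ, ← smul_eq_mul]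
        exact Finset.card_nsmul_le_sum _ _ _ hextend

end Tuples

section Nonattacking

open piecewiseQuasiPoly

/-- Two lattice points are nonattacking with respect to a family of linear forms, one for each basic
move and vanishing along it, if no form of the family vanishes on their difference. -/
def Nonattacking {ι Λ : Type*} [AddCommGroup Λ] (μ : ι → Λ →+ ℤ) (x y : Λ) : Prop :=
  ∀ i, μ i (x - y) ≠ 0

variable {ι κ Λ : Type*} [AddCommGroup Λ]

lemma nonattacking_add_left_iff (μ : ι → Λ →+ ℤ) (v x y : Λ) :
    Nonattacking μ (v + x) (v + y) ↔ Nonattacking μ x y := by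
  simp only [Nonattacking, add_sub_add_left_eq_sub]

lemma nonattacking_comm {μ : ι → Λ →+ ℤ} {x y : Λ} :
    Nonattacking μ x y ↔ Nonattacking μ y x :=
  forall_congr' fun i => by rw [← neg_sub y x, map_neg, neg_ne_zero]

lemma not_nonattacking_self [Nonempty ι] (μ : ι → Λ →+ ℤ) (x : Λ) : ¬ Nonattacking μ x x :=
  fun h => h (Classical.arbitrary ι) (by simp)

open Classical in
lemma card_tuples_region_mem [Finite ι] [Finite κ] {Γ : Type} [AddCommGroup Γ] {s : ℤ → Finset Γ}
    (hs : SumClosed s) (ℓ : κ → Γ →+ ℤ) (h : κ → ℤ) (μ : ι → Γ →+ ℤ) (q : ℕ) :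
    (fun t => ((tuples {z ∈ s t | z ∈ region ℓ (t • h)} (Nonattacking μ) q).card : ℚ)) ∈
      piecewiseQuasiPoly ℤ := by
  cases nonempty_fintype ι
  cases nonempty_fintype κ
  let entry (i : Fin q) : ℤ × (Fin q → Γ) →+ Γ :=
    (Pi.evalAddMonoidHom _ i).comp (AddMonoidHom.snd _ _)
  let inRegion (p : Fin q × κ) : ℤ × (Fin q → Γ) →+ ℤ :=
    h p.2 • AddMonoidHom.fst _ _ - (ℓ p.2).comp (entry p.1)
  let attack (p : (Fin q × Fin q) × ι) : ℤ × (Fin q → Γ) →+ ℤ :=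
    (μ p.2).comp (entry p.1.1 - entry p.1.2)
  let offDiagonal : Finset ((Fin q × Fin q) × ι) := Finset.univ.offDiag ×ˢ Finset.univ
  have hinRegion := prod_mem fun p (_ : p ∈ Finset.univ) => pos_mem (inRegion p)
  have hattack := prod_mem fun p (_ : p ∈ offDiagonal) => ne_zero_mem (attack p)
  convert hs.piFinset q ℤ (AddMonoidHom.id ℤ) _ (mul_mem hinRegion hattack) using 1
  ext t
  have htuples : tuples {z ∈ s t | z ∈ region ℓ (t • h)} (Nonattacking μ) q =
      {z ∈ Fintype.piFinset fun _ : Fin q => s t | (∀ p, 0 < inRegion p (t, z)) ∧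
        ∀ p ∈ offDiagonal, attack p (t, z) ≠ 0} := by
    ext z
    simp only [tuples, Finset.mem_filter, Fintype.mem_piFinset, forall_and, and_assoc]
    simp [region, Nonattacking, inRegion, attack, entry, offDiagonal, mul_comm]
    tauto
  rw [htuples, Finset.natCast_card_filter]
  exact Finset.sum_congr rfl fun z _ => by
    simp only [Pi.mul_apply, Finset.prod_apply, Finset.prod_ite_zero, Finset.prod_const_one,
      Finset.mem_univ, true_imp_iff, ite_zero_mul_ite_zero, mul_one]

theorem exists_isQuasiPoly_ncard_configurations_region [Finite ι] [Nonempty ι] [Finite κ]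
    {Γ : Type} [AddCommGroup Γ] {s : ℤ → Finset Γ} (hs : SumClosed s) (ℓ : κ → Γ →+ ℤ) (h : κ → ℤ)
    (hsub : ∀ t > 0, region ℓ (t • h) ⊆ s t) (μ : ι → Γ →+ ℤ) (q : ℕ) :
    ∃ g, IsQuasiPoly g ∧
      ∀ t > 0, ((configurations (region ℓ (t • h)) (Nonattacking μ) q).ncard : ℚ) = g t := by
  classical
  obtain ⟨g, hg, hgt⟩ := exists_isQuasiPoly_eq_of_pos (card_tuples_region_mem hs ℓ h μ q)
  refine ⟨_, (isPeriodic_const (q.factorial : ℚ)⁻¹).isQuasiPoly.mul hg, fun t ht => ?_⟩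
  have hfilter : (({z ∈ s t | z ∈ region ℓ (t • h)} : Finset Γ) : Set Γ) = region ℓ (t • h) := by
    ext z
    simpa using @hsub t ht z
  have hfac : (q.factorial : ℚ) ≠ 0 := by exact_mod_cast q.factorial_ne_zero
  rw [Pi.mul_apply, ← hgt t ht, card_tuples_eq _ _ (not_nonattacking_self μ), hfilter]
  push_cast
  field_simp

end Nonattacking

section LatticePoints

open Filter Topology

lemma realVec_injective {ι : Type*} : Function.Injective (realVec : (ι → ℤ) →+* (ι → ℝ)) :=
  fun v w h => funext fun i => by simpa using congrFun h i

lemma exists_preimage_smul_subset_piFinset_Ioc {ι : Type*} [Fintype ι] [DecidableEq ι]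
    {s : Set (ι → ℝ)} (hs : Bornology.IsBounded s) :
    ∃ K : ℕ, ∀ t : ℤ, 0 < t → realVec ⁻¹' ((t : ℝ) • s) ⊆
      Fintype.piFinset fun _ : ι => Finset.Ioc (-(K : ℤ) * t) (K * t) := by
  obtain ⟨R, hR⟩ := hs.exists_norm_le
  obtain ⟨K, hK⟩ := exists_nat_gt R
  refine ⟨K, fun t ht z hz => Fintype.mem_piFinset.2 fun i => Finset.mem_Ioc.2 ?_⟩
  obtain ⟨x, hx, (hxz : (t : ℝ) • x = realVec z)⟩ := hz
  have ht' : (0 : ℝ) < t := by exact_mod_cast ht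
  have hxi : |x i| < K := (norm_le_pi_norm x i).trans_lt ((hR x hx).trans_lt hK)
  have hzi : |(z i : ℝ)| < K * t := by
    rw [← realVec_apply z i, ← hxz, Pi.smul_apply, smul_eq_mul, abs_mul, abs_of_pos ht', mul_comm]
    gcongr
  obtain ⟨hlo, hhi⟩ := abs_lt.1 (show |z i| < K * t by exact_mod_cast hzi)
  constructor <;> linarith

lemma finite_preimage_realVec {ι : Type*} [Finite ι] {s : Set (ι → ℝ)}
    (hs : Bornology.IsBounded s) : (realVec ⁻¹' s).Finite := by
  classical
  cases nonempty_fintype ι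
  obtain ⟨K, hK⟩ := exists_preimage_smul_subset_piFinset_Ioc hs
  have hbox := hK 1 one_pos
  rw [Int.cast_one, one_smul] at hbox
  exact (Finset.finite_toSet _).subset hbox

lemma card_piFinset_hyperplane_le {ι : Type*} [Fintype ι] [DecidableEq ι] (s : Finset ℤ)
    {m : ι → ℤ} (hm : m ≠ 0) (c : ℤ) :
    {y ∈ Fintype.piFinset fun _ : ι => s | m ⬝ᵥ y = c}.card ≤ s.card ^ (Fintype.card ι - 1) := by
  obtain ⟨i, hi⟩ := Function.ne_iff.1 hm
  calc {y ∈ Fintype.piFinset fun _ : ι => s | m ⬝ᵥ y = c}.card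
      ≤ (Fintype.piFinset fun _ : {j // j ≠ i} => s).card := by
        refine Finset.card_le_card_of_injOn (fun y j => y j) (fun y hy => ?_) ?_
        · simp only [Finset.coe_filter, Set.mem_ofPred_eq, Fintype.mem_piFinset] at hy
          simpa using fun j _ => hy.1 j
        · intro y hy z hz hyz
          have hne (j) (hj : j ≠ i) : y j = z j := congrFun hyz ⟨j, hj⟩
          have hdot : m ⬝ᵥ y = m ⬝ᵥ z := by
            simp only [Finset.coe_filter, Set.mem_ofPred_eq] at hy hz
            rw [hy.2, hz.2]
          have hsum : ∑ j ∈ Finset.univ.erase i, m j * y j = ∑ j ∈ Finset.univ.erase i, m j * z j :=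
            Finset.sum_congr rfl fun j hj => by rw [hne j (Finset.ne_of_mem_erase hj)]
          simp only [dotProduct, ← Finset.add_sum_erase _ _ (Finset.mem_univ i), hsum] at hdot
          have hyi : y i = z i := mul_left_cancel₀ hi (add_right_cancel hdot)
          exact funext fun j => if hj : j = i then hj ▸ hyi else hne j hj
    _ = s.card ^ (Fintype.card ι - 1) := by simp

lemma tendsto_ncard_preimage_smul_div_pow {ι : Type*} [Fintype ι] {s : Set (ι → ℝ)}
    (hs : Bornology.IsBounded s)
    (hmeas : MeasurableSet s) (hfrontier : volume (frontier s) = 0) :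
    Tendsto (fun n : ℕ => ((realVec ⁻¹' ((n : ℝ) • s)).ncard : ℝ) / (n : ℝ) ^ Fintype.card ι) atTop
      (𝓝 (volume.real s)) := by
  refine (tendsto_card_div_pow_atTop_volume s hs hmeas hfrontier).congr' ?_
  filter_upwards [eventually_gt_atTop 0] with n hn
  have hn' : (n : ℝ) ≠ 0 := by exact_mod_cast hn.ne'
  have hlattice : (Submodule.span ℤ (Set.range (Pi.basisFun ℝ ι)) : Set (ι → ℝ)) =
      Set.range realVec := by
    ext x
    rw [SetLike.mem_coe, Module.Basis.mem_span_iff_repr_mem]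
    simp [Set.mem_range, funext_iff, Classical.skolem]
  let scaled (z : ι → ℤ) : ι → ℝ := (n : ℝ)⁻¹ • realVec z
  have hpreimage : realVec ⁻¹' ((n : ℝ) • s) = scaled ⁻¹' s :=
    Set.ext fun z => Set.mem_smul_set_iff_inv_smul_mem₀ hn' s (realVec z)
  rw [hlattice, Nat.card_coe_set_eq, Set.smul_set_range, hpreimage,
    ← Set.image_preimage_eq_inter_range, Set.ncard_image_of_injective]
  exact (smul_right_injective _ (inv_ne_zero hn')).comp realVec_injective

/-- The linear form `a ⬝ᵥ ·` on integer vectors. -/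
def dotForm {ι : Type*} [Fintype ι] (a : ι → ℤ) : (ι → ℤ) →+ ℤ :=
  (dotProductBilin ℤ ℤ a).toAddMonoidHom

@[simp]
lemma dotForm_apply {ι : Type*} [Fintype ι] (a x : ι → ℤ) : dotForm a x = a ⬝ᵥ x := rfl

open Classical in
lemma card_filter_not_nonattacking_le {ι κ : Type*} [Fintype ι] [Fintype κ] {m : κ → ι → ℤ}
    (hm : ∀ k, m k ≠ 0) {s : Finset ℤ} {D : Finset (ι → ℤ)}
    (hD : D ⊆ Fintype.piFinset fun _ => s) (x : ι → ℤ) :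
    {y ∈ D | ¬ Nonattacking (fun k => dotForm (m k)) y x}.card ≤
      Fintype.card κ * s.card ^ (Fintype.card ι - 1) := by
  have hcover : {y ∈ D | ¬ Nonattacking (fun k => dotForm (m k)) y x} ⊆
      Finset.univ.biUnion fun k => {y ∈ Fintype.piFinset fun _ => s | m k ⬝ᵥ y = m k ⬝ᵥ x} := by
    intro y hy
    simp only [Finset.mem_filter, Nonattacking, not_forall, not_not, dotForm_apply, dotProduct_sub,
      sub_eq_zero] at hy
    simpa using ⟨fun i => Fintype.mem_piFinset.1 (hD hy.1) i, hy.2⟩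
  exact (Finset.card_le_card hcover).trans
    (Finset.card_biUnion_le_card_mul _ _ _ fun k _ => card_piFinset_hyperplane_le s (hm k) _)

lemma tendsto_card_tuples_div_pow {α : Type*} {D : ℕ → Finset α} {r : α → α → Prop}
    [DecidableRel r] {A : ℕ → ℕ} {e : ℕ} {c : ℝ}
    (hA : ∀ᶠ n in atTop, ∀ x ∈ D n, {y ∈ D n | ¬ (r y x ∧ r x y)}.card ≤ A n)
    (hA_lim : Tendsto (fun n : ℕ => (A n : ℝ) / (n : ℝ) ^ e) atTop (𝓝 0))
    (hD_lim : Tendsto (fun n : ℕ => ((D n).card : ℝ) / (n : ℝ) ^ e) atTop (𝓝 c)) (q : ℕ) :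
    Tendsto (fun n : ℕ => ((tuples (D n) r q).card : ℝ) / (n : ℝ) ^ (e * q)) atTop (𝓝 (c ^ q)) := by
  have hfree : Tendsto (fun n : ℕ => (((D n).card - q * A n : ℕ) : ℝ) / (n : ℝ) ^ e) atTop
      (𝓝 c) := by
    have hlower := hD_lim.sub (hA_lim.const_mul (q : ℝ))
    rw [mul_zero, sub_zero] at hlower
    refine tendsto_of_tendsto_of_tendsto_of_le_of_le hlower hD_lim (fun n => ?_) fun n => ?_
    · have hsub : ((D n).card : ℝ) - q * A n ≤ ((D n).card - q * A n : ℕ) := by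
        rw [sub_le_iff_le_add]
        exact_mod_cast Nat.sub_le_iff_le_add.1 le_rfl
      calc ((D n).card : ℝ) / (n : ℝ) ^ e - q * (A n / (n : ℝ) ^ e)
          = ((D n).card - q * A n) / (n : ℝ) ^ e := by ring
        _ ≤ _ := by gcongr
    · dsimp only
      gcongr
      exact Nat.sub_le _ _
  refine tendsto_of_tendsto_of_tendsto_of_le_of_le' (hfree.pow q) (hD_lim.pow q) ?_ ?_
  · filter_upwards [hA] with n hn
    rw [div_pow, ← pow_mul]
    gcongr
    exact_mod_cast pow_le_card_tuples hn q
  · refine Eventually.of_forall fun n => ?_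
    rw [div_pow, ← pow_mul]
    gcongr
    exact_mod_cast card_tuples_le (D n) r

lemma tendsto_mul_pow_pred_div_pow (a b : ℕ) {e : ℕ} (he : 0 < e) :
    Tendsto (fun n : ℕ => ((a * (b * n) ^ (e - 1) : ℕ) : ℝ) / (n : ℝ) ^ e) atTop (𝓝 0) := by
  refine (tendsto_const_div_atTop_nhds_zero_nat (a * b ^ (e - 1) : ℝ)).congr' ?_
  filter_upwards [eventually_gt_atTop 0] with n hn
  have hn' : (n : ℝ) ≠ 0 := by exact_mod_cast hn.ne'
  obtain ⟨e, rfl⟩ := Nat.exists_eq_succ_of_ne_zero he.ne'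
  rw [Nat.succ_sub_one, pow_succ]
  push_cast
  rw [mul_pow]
  field_simp

open Classical in
lemma tendsto_card_tuples_nonattacking_div_pow {ι κ : Type*} [Fintype ι] [Finite κ] [Nonempty κ]
    {m : κ → ι → ℤ} (hm : ∀ k, m k ≠ 0) {K : ℕ} {D : ℕ → Finset (ι → ℤ)}
    (hD : ∀ n, D n ⊆ Fintype.piFinset fun _ => Finset.Ioc (-(K : ℤ) * n) (K * n)) {c : ℝ}
    (hD_lim : Tendsto (fun n : ℕ => ((D n).card : ℝ) / (n : ℝ) ^ Fintype.card ι) atTop (𝓝 c))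
    (q : ℕ) :
    Tendsto (fun n : ℕ => ((tuples (D n) (Nonattacking fun k => dotForm (m k)) q).card : ℝ) /
      (n : ℝ) ^ (Fintype.card ι * q)) atTop (𝓝 (c ^ q)) := by
  cases nonempty_fintype κ
  obtain ⟨i, -⟩ := Function.ne_iff.1 (hm (Classical.arbitrary κ))
  refine tendsto_card_tuples_div_pow (Eventually.of_forall fun n x _ => ?_)
    (tendsto_mul_pow_pred_div_pow (Fintype.card κ) (2 * K) (Fintype.card_pos_iff.2 ⟨i⟩)) hD_lim q
  have hcard : (Finset.Ioc (-(K : ℤ) * n) (K * n)).card = 2 * K * n := by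
    rw [Int.card_Ioc]
    lia
  simp only [nonattacking_comm (x := x), and_self]
  simpa only [hcard] using card_filter_not_nonattacking_le hm (hD n) x

theorem tendsto_ncard_configurations_div_pow {ι κ : Type*} [Fintype ι] [Finite κ] [Nonempty κ]
    {m : κ → ι → ℤ} (hm : ∀ k, m k ≠ 0) {s : Set (ι → ℝ)} (hs : Bornology.IsBounded s)
    (hmeas : MeasurableSet s) (hfrontier : volume (frontier s) = 0) (q : ℕ) :
    Tendsto (fun n : ℕ => ((configurations (realVec ⁻¹' ((n : ℝ) • s))
      (Nonattacking fun k => dotForm (m k)) q).ncard : ℝ) / (n : ℝ) ^ (Fintype.card ι * q)) atTop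
      (𝓝 (volume.real s ^ q / q.factorial)) := by
  classical
  obtain ⟨K, hK⟩ := exists_preimage_smul_subset_piFinset_Ioc hs
  let box (n : ℕ) : Finset (ι → ℤ) :=
    Fintype.piFinset fun _ => Finset.Ioc (-(K : ℤ) * n) (K * n)
  let D (n : ℕ) : Finset (ι → ℤ) := {z ∈ box n | z ∈ realVec ⁻¹' ((n : ℝ) • s)}
  have hD_eq {n : ℕ} (hn : 0 < n) : (D n : Set (ι → ℤ)) = realVec ⁻¹' ((n : ℝ) • s) := by
    ext z
    simpa [D, box] using @hK n (by exact_mod_cast hn) z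
  have hD_lim : Tendsto (fun n : ℕ => ((D n).card : ℝ) / (n : ℝ) ^ Fintype.card ι) atTop
      (𝓝 (volume.real s)) := by
    refine (tendsto_ncard_preimage_smul_div_pow hs hmeas hfrontier).congr' ?_
    filter_upwards [eventually_gt_atTop 0] with n hn
    rw [← hD_eq hn, Set.ncard_coe_finset]
  have htuples := tendsto_card_tuples_nonattacking_div_pow hm (fun n => Finset.filter_subset _ _)
    hD_lim q
  refine (htuples.div_const _).congr' ?_
  filter_upwards [eventually_gt_atTop 0] with n hn
  rw [card_tuples_eq _ _ (not_nonattacking_self _), hD_eq hn]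
  have hfac : (q.factorial : ℝ) ≠ 0 := by exact_mod_cast q.factorial_ne_zero
  push_cast
  field_simp

end LatticePoints

section LatticePolytopes

open Filter Topology

variable {d : ℕ} {κ : Type*}

/-- The number of `q`-point configurations in the open board `(n + 1) B°` in which no two points
differ by a vector orthogonal to one of the `m k`. For `d = 2` and `m k = (d, -c)` this is the
paper's `u_P(q; n)` for the piece with basic moves `(c, d)`. -/
noncomputable def nonattackingCount (m : κ → Fin d → ℤ) (B : Set (Fin d → ℝ)) (q n : ℕ) : ℕ :=
  (configurations (realVec ⁻¹' (((n : ℝ) + 1) • interior B))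
    (Nonattacking fun k => dotForm (m k)) q).ncard

lemma exists_preimage_smul_interior_convexHull_eq_region {V : Finset (Fin d → ℤ)}
    (hV : V.Nonempty) :
    ∃ (k : ℕ) (a v : Fin k → Fin d → ℤ), (∀ e, v e ∈ V) ∧ (∀ e, ∀ w ∈ V, a e ⬝ᵥ w ≤ a e ⬝ᵥ v e) ∧
      ∀ t : ℤ, 0 < t →
        realVec ⁻¹' ((t : ℝ) • interior (convexHull ℝ (realVec '' (V : Set (Fin d → ℤ))))) =
          region (fun e => dotForm (a e)) (t • fun e => a e ⬝ᵥ v e) := by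
  obtain ⟨k, a, v, hvV, hv, hinterior⟩ := exists_interior_convexHull_eq_inter_halfSpaces hV
  refine ⟨k, a, v, hvV, hv, fun t ht => Set.ext fun z => ?_⟩
  have ht' : (0 : ℝ) < t := by exact_mod_cast ht
  rw [Set.mem_preimage, Set.mem_smul_set_iff_inv_smul_mem₀ ht'.ne', hinterior]
  refine forall_congr' fun e => ?_
  rw [dotProduct_smul, realVec_dotProduct, smul_eq_mul, inv_mul_lt_iff₀ ht']
  exact_mod_cast Iff.rfl

lemma isBounded_convexHull_realVec_image (V : Finset (Fin d → ℤ)) :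
    Bornology.IsBounded (convexHull ℝ (realVec '' (V : Set (Fin d → ℤ)))) :=
  isBounded_convexHull.2 (V.finite_toSet.image _).isBounded

lemma exists_isQuasiPoly_nonattackingCount [Finite κ] [Nonempty κ] (m : κ → Fin d → ℤ)
    {V : Finset (Fin d → ℤ)} (hV : V.Nonempty) (q : ℕ) :
    ∃ g, IsQuasiPoly g ∧ ∀ n : ℕ,
      (nonattackingCount m (convexHull ℝ (realVec '' (V : Set (Fin d → ℤ)))) q n : ℚ) =
        g (n + 1) := by
  obtain ⟨k, a, v, -, -, hregion⟩ := exists_preimage_smul_interior_convexHull_eq_region hV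
  obtain ⟨K, hK⟩ := exists_preimage_smul_subset_piFinset_Ioc
    ((isBounded_convexHull_realVec_image V).subset interior_subset)
  obtain ⟨g, hg, hgt⟩ := exists_isQuasiPoly_ncard_configurations_region
    ((sumClosed_Ioc (-(K : ℤ)) K).piFinset d) (fun e => dotForm (a e)) (fun e => a e ⬝ᵥ v e)
    (fun t ht => hregion t ht ▸ hK t ht) (fun k => dotForm (m k)) q
  refine ⟨g, hg, fun n => ?_⟩
  rw [← hgt _ (by positivity), ← hregion _ (by positivity)]
  simp [nonattackingCount]

lemma two_mul_nonattackingCount_le [Nonempty κ] (m : κ → Fin d → ℤ)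
    {V : Finset (Fin d → ℤ)} (hV : V.Nonempty) (q n : ℕ) :
    let u := nonattackingCount m (convexHull ℝ (realVec '' (V : Set (Fin d → ℤ)))) q
    2 * u (n + 1) ≤ u n + u (n + 2) := by
  intro u
  obtain ⟨k, a, v, hvV, hv, hregion⟩ := exists_preimage_smul_interior_convexHull_eq_region hV
  have hu (n : ℕ) : (u n : ℕ∞) = (configurations (region (fun e => dotForm (a e))
      (((n : ℤ) + 1) • fun e => a e ⬝ᵥ v e)) (Nonattacking fun k => dotForm (m k)) q).encard := by
    have hfinite := finite_preimage_realVec (((isBounded_convexHull_realVec_image V).subset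
      interior_subset).smul₀ ((n : ℝ) + 1))
    rw [← hregion _ (by positivity)]
    push_cast
    exact (finite_configurations hfinite _ q).cast_ncard_eq
  obtain ⟨v₀, hv₀⟩ := hV
  have hconvex := two_mul_encard_configurations_region_le (ℓ := fun e => dotForm (a e)) (w := v)
    (h := fun e => a e ⬝ᵥ v e) (fun _ => rfl)
    (fun e e' => hv e' (v e) (hvV e)) (fun e => hv e v₀ hv₀)
    (nonattacking_add_left_iff fun k => dotForm (m k)) q ((n : ℤ) + 1)
  have hu₁ := hu (n + 1)
  have hu₂ := hu (n + 2)
  push_cast at hu₁ hu₂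
  rw [add_right_comm _ 2 1] at hu₂
  rw [← hu, ← hu₁, ← hu₂] at hconvex
  exact_mod_cast hconvex

lemma tendsto_nonattackingCount_div_pow [Finite κ] [Nonempty κ] {m : κ → Fin d → ℤ}
    (hm : ∀ k, m k ≠ 0) {B : Set (Fin d → ℝ)} (hB : Convex ℝ B) (hbounded : Bornology.IsBounded B)
    (q : ℕ) :
    Tendsto (fun n : ℕ => (nonattackingCount m B q n : ℝ) / (n : ℝ) ^ (d * q)) atTop
      (𝓝 (volume.real B ^ q / q.factorial)) := by
  have hlim := tendsto_ncard_configurations_div_pow hm (hbounded.subset interior_subset)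
    isOpen_interior.measurableSet (hB.interior.addHaar_frontier volume) q
  have hvol : volume.real (interior B) = volume.real B :=
    measureReal_congr (interior_ae_eq_of_null_frontier (hB.addHaar_frontier volume))
  have hratio : Tendsto (fun n : ℕ => (((n : ℝ) + 1) / n) ^ (d * q)) atTop (𝓝 1) := by
    simpa using ((tendsto_natCast_div_add_atTop (1 : ℝ)).inv₀ one_ne_zero).pow (d * q)
  have hshift := (hlim.comp (tendsto_add_atTop_nat 1)).mul hratio
  rw [hvol, mul_one, Fintype.card_fin] at hshift
  refine hshift.congr fun n => ?_
  simp only [Function.comp_apply, Nat.cast_add_one, nonattackingCount, div_pow]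
  field_simp

end LatticePolytopes

section PlanarBoards

open ContinuousLinearEquiv (finTwoArrow)

lemma preimage_finTwoArrow_convexHull (V : Finset (ℤ × ℤ)) :
    finTwoArrow ℝ ℝ ⁻¹' convexHull ℝ ((fun v : ℤ × ℤ => (((v.1 : ℝ), (v.2 : ℝ)) : ℝ × ℝ)) '' V) =
      convexHull ℝ
        (realVec '' (V.map (finTwoArrowEquiv ℤ).symm.toEmbedding : Set (Fin 2 → ℤ))) := by
  rw [← (finTwoArrow ℝ ℝ).image_symm_eq_preimage]
  refine ((finTwoArrow ℝ ℝ).symm.toLinearMap.image_convexHull _).trans ?_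
  rw [Finset.coe_map, Set.image_image, Set.image_image]
  congr! 3 with v
  ext i
  fin_cases i <;> rfl

lemma ncard_eq_nonattackingCount_preimage_finTwoArrow (M : Finset (ℤ × ℤ)) (B : Set (ℝ × ℝ))
    (q n : ℕ) :
    Set.ncard {S : Finset (ℤ × ℤ) |
      S.card = q ∧
      (∀ z ∈ S, (((z.1 : ℝ), (z.2 : ℝ)) : ℝ × ℝ) ∈ ((n : ℝ) + 1) • interior B) ∧
      (∀ z ∈ S, ∀ w ∈ S, z ≠ w → ∀ m ∈ M,
        (z.1 - w.1) * m.2 - (z.2 - w.2) * m.1 ≠ 0)} =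
      nonattackingCount (fun m : M => ![m.1.2, -m.1.1]) (finTwoArrow ℝ ℝ ⁻¹' B) q n := by
  have hn : (n : ℝ) + 1 ≠ 0 := by positivity
  have hboard : realVec ⁻¹' (((n : ℝ) + 1) • interior (finTwoArrow ℝ ℝ ⁻¹' B)) =
      finTwoArrowEquiv ℤ ⁻¹'
        {z | (((z.1 : ℝ), (z.2 : ℝ)) : ℝ × ℝ) ∈ ((n : ℝ) + 1) • interior B} := by
    ext z
    have hint := (finTwoArrow ℝ ℝ).toHomeomorph.preimage_interior B
    simp only [ContinuousLinearEquiv.coe_toHomeomorph] at hint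
    rw [← hint]
    simp only [Set.mem_preimage, Set.mem_ofPred_eq, Set.mem_smul_set_iff_inv_smul_mem₀ hn, map_smul]
    rfl
  have hpair : Nonattacking (fun m : M => dotForm ![m.1.2, -m.1.1]) =
      fun x y => ∀ m ∈ M, (x 0 - y 0) * m.2 - (x 1 - y 1) * m.1 ≠ 0 := by
    ext x y
    simp only [Nonattacking, dotForm_apply, Matrix.vec2_dotProduct, Subtype.forall]
    refine forall₂_congr fun m _ => not_congr (Eq.congr_left ?_)
    simp only [Matrix.cons_val_zero, Matrix.cons_val_one, Matrix.cons_val_fin_one, Pi.sub_apply]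
    ring
  rw [nonattackingCount, hboard, hpair, Set.ncard, Set.ncard]
  exact congrArg ENat.toNat (encard_configurations_preimage (finTwoArrowEquiv ℤ) _
    (fun z w => ∀ m ∈ M, (z.1 - w.1) * m.2 - (z.2 - w.2) * m.1 ≠ 0) q).symm

lemma volume_real_preimage_finTwoArrow (B : Set (ℝ × ℝ)) :
    volume.real (finTwoArrow ℝ ℝ ⁻¹' B) = volume.real B :=
  congrArg ENNReal.toReal
    ((volume_preserving_finTwoArrow ℝ).measure_preimage_equiv (f := MeasurableEquiv.finTwoArrow) B)

lemma interior_preimage_finTwoArrow_nonempty {B : Set (ℝ × ℝ)} (hB : (interior B).Nonempty) :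
    (interior (finTwoArrow ℝ ℝ ⁻¹' B)).Nonempty :=
  (finTwoArrow ℝ ℝ).toHomeomorph.preimage_interior B ▸
    hB.preimage (finTwoArrow ℝ ℝ).surjective

end PlanarBoards

end NonattackingRiders

open NonattackingRiders

theorem stmt_2_general {d : ℕ} {κ : Type*} [Finite κ] [Nonempty κ]
    {m : κ → Fin d → ℤ} (hm : ∀ k, m k ≠ 0) {V : Finset (Fin d → ℤ)} {B : Set (Fin d → ℝ)}
    (hB : B = convexHull ℝ (realVec '' (V : Set (Fin d → ℤ)))) (hBint : (interior B).Nonempty)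
    {q : ℕ} (hq : 0 < q) :
    IsQuasiPolyWithRigidTop (nonattackingCount m B q) (d * q)
      (volume.real B ^ q / q.factorial) := by
  subst hB
  have hV : V.Nonempty := by
    simpa using hBint.mono interior_subset
  have hbounded := isBounded_convexHull_realVec_image V
  have hvol : 0 < volume.real (convexHull ℝ (realVec '' (V : Set (Fin d → ℤ)))) :=
    ENNReal.toReal_pos (Measure.measure_pos_of_nonempty_interior volume hBint).ne'
      hbounded.measure_lt_top.ne
  have hd : 0 < d := by
    obtain ⟨i, -⟩ := Function.ne_iff.1 (hm (Classical.arbitrary κ))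
    exact i.pos
  obtain ⟨g, hg, hgn⟩ := exists_isQuasiPoly_nonattackingCount m hV q
  exact isQuasiPolyWithRigidTop_of_convex hg hgn (two_mul_nonattackingCount_le m hV q)
    (by positivity) (by positivity)
    (tendsto_nonattackingCount_div_pow hm (convex_convexHull ℝ _) hbounded q)

/-- if the board polygon has integral vertices, then `u_P(q;n)` is a
quasipolynomial of degree `2q` whose two leading coefficients are the same in every
constituent; the coefficient of `n^(2q)` is `(vol B)^q / q!`. -/
theorem stmt_2
    (M : Finset (ℤ × ℤ)) (hMne : M.Nonempty)
    (hMmove : ∀ m ∈ M, m ≠ 0 ∧ Int.gcd m.1 m.2 = 1)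
    (hMpar : ∀ m ∈ M, ∀ m' ∈ M, m ≠ m' → m.1 * m'.2 - m.2 * m'.1 ≠ 0)
    (V : Finset (ℤ × ℤ))
    (B : Set (ℝ × ℝ))
    (hB : B = convexHull ℝ ((fun v : ℤ × ℤ => (((v.1 : ℝ), (v.2 : ℝ)) : ℝ × ℝ)) '' V))
    (hBint : (interior B).Nonempty)
    (q : ℕ) (hq : 0 < q)
    (u : ℕ → ℕ)
    (hu : ∀ n : ℕ, u n = Set.ncard {S : Finset (ℤ × ℤ) |
      S.card = q ∧
      (∀ z ∈ S, (((z.1 : ℝ), (z.2 : ℝ)) : ℝ × ℝ) ∈ ((n : ℝ) + 1) • interior B) ∧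
      (∀ z ∈ S, ∀ w ∈ S, z ≠ w → ∀ m ∈ M,
        (z.1 - w.1) * m.2 - (z.2 - w.2) * m.1 ≠ 0)}) :
    ∃ p : ℕ, 0 < p ∧ ∃ f : ℕ → Polynomial ℚ,
      (∀ k < p, (f k).degree = ((2 * q : ℕ) : WithBot ℕ)) ∧
      (∀ k < p, ∀ k' < p,
        (f k).coeff (2 * q) = (f k').coeff (2 * q) ∧
        (f k).coeff (2 * q - 1) = (f k').coeff (2 * q - 1)) ∧
      (∀ k < p,
        ((f k).coeff (2 * q) : ℝ) = (volume B).toReal ^ q / (Nat.factorial q : ℝ)) ∧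
      (∀ n : ℕ, (u n : ℚ) = (f (n % p)).eval (n : ℚ)) := by
  obtain rfl : u = _ := funext fun n =>
    (hu n).trans (ncard_eq_nonattackingCount_preimage_finTwoArrow M B q n)
  have := hMne.to_subtype
  have hm (m : M) : ![m.1.2, -m.1.1] ≠ 0 := fun h =>
    (hMmove m m.2).1 (Prod.ext (by simpa using congrFun h 1) (by simpa using congrFun h 0))
  have hcount := stmt_2_general hm (hB ▸ preimage_finTwoArrow_convexHull V)
    (interior_preimage_finTwoArrow_nonempty hBint) hq
  rwa [volume_real_preimage_finTwoArrow] at hcount
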